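/- arXiv:1311.1594 — 6 statements merged into one kernel-verified Lean document; each statement's English description precedes it below -/
import Mathlib

section
/- Let v be a sequence with k ≥ ||v|| and let r ≥ 1. Then for every n, Ex_1(v,(k-1)r+1,n) ≤ Ex_r(v,k,n) ≤ r·Ex_1(v,k,n). -/
/-- `u` is `(k,r)`-sparse: for every `j`, the letters at positions
`j, j+r, ..., j+(k-1)r` (those within range) are pairwise distinct. -/
def ArithSparse (k r : ℕ) (u : List ℕ) : Prop :=
  ∀ j a b : ℕ, a < b → b < k → j + b * r < u.length →
    u.getD (j + a * r) 0 ≠ u.getD (j + b * r) 0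

/-- Two sequences are isomorphic if one is obtained from the other by a
bijective renaming of letters. -/
def Isomorphic (u v : List ℕ) : Prop := ∃ β : ℕ ≃ ℕ, v = u.map β

/-- `u` contains `v` if `u` has a subsequence isomorphic to `v`. -/
def Contains (u v : List ℕ) : Prop := ∃ w : List ℕ, w.Sublist u ∧ Isomorphic w v

/-- `Ex v k r n` is the maximum length of a `v`-free, `(k,r)`-sparse sequence
using at most `n` distinct letters. -/
noncomputable def Ex (v : List ℕ) (k r n : ℕ) : ℕ :=
  sSup {l : ℕ | ∃ u : List ℕ,
    u.length = l ∧ ¬ Contains u v ∧ ArithSparse k r u ∧ u.toFinset.card ≤ n}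

/-! Upper bound: keeping every `r`-th letter of a `(k, r)`-sparse word yields a `k`-sparse
subsequence at least `1 / r` times as long.

Lower bound: a `((k - 1) * r + 1)`-sparse word is `(k, r)`-sparse. As `Ex` is a supremum in `ℕ`,
this inequality also needs the lengths of the `v`-free `(k, r)`-sparse words over `n` letters to be
bounded. For `r = 1`, cut such a word into blocks of length `k`; each consists of `k` distinct
letters. A word with enough blocks has `|v|` of them with the same letter set `T`, by pigeonhole.
Since `‖v‖ ≤ k = |T|`, a copy of `v` can be read off by picking one letter from each of these
blocks. Keeping every `r`-th letter reduces the general case to this one. -/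

section Lists

variable {α : Type*}

theorem sublist_flatten_of_forall_subset {w : List α} {L : List (List α)}
    (hlen : w.length ≤ L.length) (hsub : ∀ b ∈ L, w ⊆ b) : w.Sublist L.flatten := by
  induction w generalizing L with
  | nil => exact List.nil_sublist _
  | cons a w ih =>
    cases L with
    | nil => simp at hlen
    | cons b L =>
      have ha : [a].Sublist b := List.singleton_sublist.2 (hsub b (by simp) (by simp))
      have hw : w.Sublist L.flatten :=
        ih (by simpa using hlen) fun c hc ↦
          (List.cons_subset.1 (hsub c (List.mem_cons_of_mem b hc))).2
      exact ha.append hw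

theorem exists_infixes_flatten_sublist {k N : ℕ} {u : List α} (h : k * N ≤ u.length) :
    ∃ L : List (List α), L.length = N ∧ L.flatten.Sublist u ∧
      ∀ b ∈ L, b <:+: u ∧ b.length = k := by
  induction N generalizing u with
  | zero => exact ⟨[], by simp⟩
  | succ N ih =>
    rw [Nat.mul_succ] at h
    obtain ⟨L, hN, hflat, hL⟩ := ih (u := u.drop k) (by rw [List.length_drop]; omega)
    refine ⟨u.take k :: L, by simp [hN], ?_, List.forall_mem_cons.2 ⟨⟨?_, ?_⟩, fun b hb ↦ ?_⟩⟩
    · simpa using (List.Sublist.refl (u.take k)).append hflat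
    · exact (List.take_prefix k u).isInfix
    · exact List.length_take_of_le (by omega)
    · exact ⟨(hL b hb).1.trans (List.drop_suffix k u).isInfix, (hL b hb).2⟩

theorem exists_le_length_filter_of_card_mul_le_length {β : Type*} [DecidableEq β] {f : α → β}
    {s : Finset β} {l : List α} {m : ℕ} (hs : s.Nonempty) (hf : ∀ a ∈ l, f a ∈ s)
    (hlen : s.card * m ≤ l.length) : ∃ b ∈ s, m ≤ (l.filter (f · = b)).length := by
  have hsum : ∑ b ∈ s, (l.map f).count b = l.length := by
    simpa using Multiset.sum_count_eq_card (s := s) (m := (l.map f : Multiset β))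
      (by simpa using hf)
  obtain ⟨b, hb, hm⟩ : ∃ b ∈ s, m ≤ (l.map f).count b :=
    Finset.exists_le_of_sum_le hs (by simpa [hsum] using hlen)
  refine ⟨b, hb, hm.trans_eq ?_⟩
  rw [List.count_eq_countP, List.countP_map, List.countP_eq_length_filter]
  rfl

theorem exists_perm_mapsTo_of_card_le {s t : Finset α} (h : s.card ≤ t.card) :
    ∃ σ : Equiv.Perm α, Set.MapsTo σ s t := by
  classical
  obtain ⟨t', ht', hcard⟩ := Finset.exists_subset_card_eq h
  let e : s ≃ t' := Finset.equivOfCardEq hcard.symm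
  exact ⟨e.extendSubtype, fun x hx ↦ ht' (e.extendSubtype_mem x hx)⟩

/-- The subsequence of letters at the positions `0, r, 2r, …`; for `r = 0` this is the whole list,
as for `r = 1`. -/
def everyNth (r : ℕ) : List α → List α
  | [] => []
  | a :: l => a :: everyNth r (l.drop (r - 1))
termination_by l => l.length
decreasing_by simp only [List.length_drop, List.length_cons]; omega

theorem getElem?_everyNth {r : ℕ} (hr : 0 < r) (u : List α) (i : ℕ) :
    (everyNth r u)[i]? = u[i * r]? := by
  induction u using everyNth.induct r generalizing i with
  | case1 => simp [everyNth]
  | case2 a l ih =>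
    cases i with
    | zero => simp [everyNth]
    | succ i =>
      have hpos : (i + 1) * r = (r - 1 + i * r) + 1 := by rw [Nat.succ_mul]; omega
      rw [everyNth, List.getElem?_cons_succ, ih, List.getElem?_drop, hpos,
        List.getElem?_cons_succ]

theorem everyNth_sublist {r : ℕ} (hr : 0 < r) (u : List α) : (everyNth r u).Sublist u :=
  List.sublist_iff_exists_orderEmbedding_getElem?_eq.2
    ⟨OrderEmbedding.ofStrictMono (· * r) (strictMono_mul_right_of_pos hr), getElem?_everyNth hr u⟩

theorem length_everyNth_le_iff {r : ℕ} (hr : 0 < r) (u : List α) (i : ℕ) :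
    (everyNth r u).length ≤ i ↔ u.length ≤ i * r := by
  rw [← List.getElem?_eq_none_iff, getElem?_everyNth hr, List.getElem?_eq_none_iff]

theorem length_le_mul_length_everyNth {r : ℕ} (hr : 0 < r) (u : List α) :
    u.length ≤ r * (everyNth r u).length := by
  rw [mul_comm]
  exact (length_everyNth_le_iff hr u _).1 le_rfl

end Lists

namespace ArithSparse

variable {k r s : ℕ} {u : List ℕ}

theorem everyNth (hr : 0 < r) (h : ArithSparse k (s * r) u) :
    ArithSparse k s (everyNth r u) := by
  intro j a b hab hb hlt
  have hpos (c : ℕ) : (j + c * s) * r = j * r + c * (s * r) := by ring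
  have hlt' : j * r + b * (s * r) < u.length := by
    rw [← hpos]
    exact lt_of_not_ge (mt (length_everyNth_le_iff hr u _).2 hlt.not_ge)
  simpa only [List.getD_eq_getElem?_getD, getElem?_everyNth hr, hpos] using
    h (j * r) a b hab hb hlt'

theorem dilate (hr : 0 < r) (h : ArithSparse ((k - 1) * r + 1) s u) :
    ArithSparse k (r * s) u := by
  intro j a b hab hb hlt
  have hbk : b * r ≤ (k - 1) * r := Nat.mul_le_mul_right r (by omega)
  rw [← mul_assoc] at hlt ⊢
  rw [← mul_assoc]
  exact h j (a * r) (b * r) (Nat.mul_lt_mul_of_pos_right hab hr) (by omega) hlt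

theorem nodup_of_isInfix {b : List ℕ} (h : ArithSparse k 1 u) (hb : b <:+: u)
    (hlen : b.length ≤ k) : b.Nodup := by
  obtain ⟨p, q, rfl⟩ := hb
  have hget {i : ℕ} (hi : i < b.length) : (p ++ b ++ q).getD (p.length + i * 1) 0 = b[i] := by
    simp [List.append_assoc, List.getElem?_append_right, List.getElem?_append_left, hi]
  refine List.pairwise_iff_getElem.2 fun i j hi hj hij ↦ ?_
  have hne := h p.length i j hij (by omega) (by simp only [List.length_append]; omega)
  rwa [hget hi, hget hj] at hne

end ArithSparse

section Containment

variable {u v : List ℕ}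

theorem contains_of_map_sublist {σ : Equiv.Perm ℕ} (h : (v.map σ).Sublist u) : Contains u v :=
  ⟨v.map σ, h, σ.symm, by simp⟩

theorem Contains.mono {w : List ℕ} (h : Contains w v) (hwu : w.Sublist u) : Contains u v :=
  let ⟨x, hx, hiso⟩ := h
  ⟨x, hx.trans hwu, hiso⟩

theorem contains_flatten {L : List (List ℕ)} {T : Finset ℕ} (hcard : v.toFinset.card ≤ T.card)
    (hlen : v.length ≤ L.length) (hT : ∀ b ∈ L, T ⊆ b.toFinset) : Contains L.flatten v := by
  obtain ⟨σ, hσ⟩ := exists_perm_mapsTo_of_card_le hcard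
  refine contains_of_map_sublist (σ := σ) ?_
  refine sublist_flatten_of_forall_subset (by simpa using hlen) fun b hb x hx ↦ ?_
  obtain ⟨y, hy, rfl⟩ := List.mem_map.1 hx
  exact List.mem_toFinset.1 (hT b hb (hσ (List.mem_toFinset.2 hy)))

theorem contains_flatten_of_two_pow_card_mul_le {L : List (List ℕ)} {S : Finset ℕ}
    (hS : ∀ b ∈ L, b.toFinset ⊆ S) (hcard : ∀ b ∈ L, v.toFinset.card ≤ b.toFinset.card)
    (hlen : 2 ^ S.card * v.length ≤ L.length) : Contains L.flatten v := by
  obtain rfl | hv := eq_or_ne v []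
  · exact contains_of_map_sublist (σ := 1) (List.nil_sublist _)
  obtain ⟨T, -, hT⟩ := exists_le_length_filter_of_card_mul_le_length (m := v.length)
    (Finset.powerset_nonempty S) (by simpa using hS) (by simpa using hlen)
  have hM {b : List ℕ} (hb : b ∈ L.filter (·.toFinset = T)) : b ∈ L ∧ b.toFinset = T := by
    simpa using hb
  obtain ⟨b, hb⟩ := List.exists_mem_of_length_pos ((List.length_pos_of_ne_nil hv).trans_le hT)
  have hvT : v.toFinset.card ≤ T.card := (hM hb).2 ▸ hcard b (hM hb).1
  exact (contains_flatten hvT hT fun c hc ↦ (hM hc).2.ge).mono List.filter_sublist.flatten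

theorem contains_of_mul_le_length {k : ℕ} (hk : v.toFinset.card ≤ k) (hs : ArithSparse k 1 u)
    (hlen : k * (2 ^ u.toFinset.card * v.length) ≤ u.length) : Contains u v := by
  obtain ⟨L, hN, hflat, hL⟩ := exists_infixes_flatten_sublist hlen
  have hcard (b : List ℕ) (hb : b ∈ L) : b.toFinset.card = k := by
    rw [List.toFinset_card_of_nodup (hs.nodup_of_isInfix (hL b hb).1 (hL b hb).2.le), (hL b hb).2]
  have hsub (b : List ℕ) (hb : b ∈ L) : b.toFinset ⊆ u.toFinset :=
    Multiset.toFinset_subset.2 (hL b hb).1.subset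
  exact (contains_flatten_of_two_pow_card_mul_le hsub (fun b hb ↦ hk.trans_eq (hcard b hb).symm)
    hN.ge).mono hflat

end Containment

/-- The words over which `Ex v k r n` takes the maximum length: the `v`-free, `(k, r)`-sparse ones
with at most `n` distinct letters. -/
structure Admissible (v : List ℕ) (k r n : ℕ) (u : List ℕ) : Prop where
  not_contains : ¬ Contains u v
  arithSparse : ArithSparse k r u
  card_le : u.toFinset.card ≤ n

section Extremal

variable {v u : List ℕ} {k r s n : ℕ}

theorem Admissible.everyNth (hr : 0 < r) (h : Admissible v k (s * r) n u) :
    Admissible v k s n (everyNth r u) where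
  not_contains hc := h.not_contains (hc.mono (everyNth_sublist hr u))
  arithSparse := h.arithSparse.everyNth hr
  card_le := (Finset.card_le_card
    (Multiset.toFinset_subset.2 (everyNth_sublist hr u).subset)).trans h.card_le

theorem Admissible.dilate (hr : 0 < r) (h : Admissible v ((k - 1) * r + 1) s n u) :
    Admissible v k (r * s) n u :=
  { h with arithSparse := h.arithSparse.dilate hr }

theorem Admissible.length_le (hk : v.toFinset.card ≤ k) (hr : 0 < r) (h : Admissible v k r n u) :
    u.length ≤ r * (k * (2 ^ n * v.length)) := by
  have hw : Admissible v k 1 n (_root_.everyNth r u) := .everyNth hr (by rwa [one_mul])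
  refine (length_le_mul_length_everyNth hr u).trans (Nat.mul_le_mul_left r ?_)
  by_contra! hlt
  refine hw.not_contains (contains_of_mul_le_length hk hw.arithSparse (le_trans ?_ hlt.le))
  gcongr
  · norm_num
  · exact hw.card_le

theorem Ex_le {m : ℕ} (h : ∀ u, Admissible v k r n u → u.length ≤ m) : Ex v k r n ≤ m := by
  refine csSup_le' ?_
  rintro _ ⟨u, rfl, hc, hs, hn⟩
  exact h u ⟨hc, hs, hn⟩

theorem Admissible.length_le_Ex (hk : v.toFinset.card ≤ k) (hr : 0 < r)
    (h : Admissible v k r n u) : u.length ≤ Ex v k r n := by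
  refine le_csSup ⟨r * (k * (2 ^ n * v.length)), ?_⟩
    ⟨u, rfl, h.not_contains, h.arithSparse, h.card_le⟩
  rintro _ ⟨w, rfl, hc, hs, hn⟩
  exact Admissible.length_le hk hr ⟨hc, hs, hn⟩

end Extremal

theorem stmt_0 (v : List ℕ) (k r : ℕ) (hk : v.toFinset.card ≤ k) (hr : 1 ≤ r) (n : ℕ) :
    Ex v ((k - 1) * r + 1) 1 n ≤ Ex v k r n ∧ Ex v k r n ≤ r * Ex v k 1 n := by
  refine ⟨Ex_le fun u hu ↦ ?_, Ex_le fun u hu ↦ ?_⟩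
  · have hu' : Admissible v k r n u := by simpa only [mul_one] using hu.dilate hr
    exact hu'.length_le_Ex hk hr
  · have hw : Admissible v k 1 n (everyNth r u) := .everyNth hr (by rwa [one_mul])
    calc u.length ≤ r * (everyNth r u).length := length_le_mul_length_everyNth hr u
      _ ≤ r * Ex v k 1 n := Nat.mul_le_mul_left r (hw.length_le_Ex hk one_pos)
end

section
/- Let v be a sequence with k ≥ ||v|| and let r ≥ 1. Then Ex_r(v,k,n) = O(n^2), i.e. there exists a constant c > 0 such that Ex_r(v,k,n) ≤ c·n^2 for all n ≥ 1. -/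
/-!
Call `l` consecutive pieces of `u` that share `k` letters a `(k, l)`-formation. With `k = ‖v‖` and
`l = |v|` a formation yields a copy of `v`, one letter from each piece, so it suffices to bound the
length of a sparse sequence without formations in terms of the number `n` of its letters.

Cut `u` into `l ^ 2` blocks of equal length. If every block had more than `n / l` letters, double
counting would give at least `n / l ^ 2` letters each lying in at least `l` blocks, and, for large
`n`, `k` of these lying in exactly the same blocks: a formation. So some block has at most `n / l`
letters, and the maximal length satisfies `f n ≤ l ^ 2 * f (n / l)`, which gives `f n = O(n ^ 2)`.
For small `n`, many blocks of bounded length with `k` letters each form a formation by pigeonhole.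
-/

open scoped Finset List

section Biclique

open Finset

variable {ι β : Type*} {r : ι → β → Prop} [∀ i x, Decidable (r i x)] {s : Finset ι} {t : Finset β}

theorem exists_biclique_of_mul_two_pow_lt {a b : ℕ} (hs : a * 2 ^ #t < #s)
    (hb : ∀ i ∈ s, b ≤ #(t.bipartiteAbove r i)) :
    ∃ S ⊆ s, ∃ T ⊆ t, a ≤ #S ∧ b ≤ #T ∧ ∀ i ∈ S, ∀ x ∈ T, r i x := by
  classical
  obtain ⟨T, hT, hlt⟩ := exists_lt_card_fiber_of_mul_lt_card_of_maps_to
    (s := s) (t := t.powerset) (f := fun i => t.bipartiteAbove r i) (n := a)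
    (fun i _ => mem_powerset.2 (filter_subset _ _))
    (by rwa [card_powerset, mul_comm])
  obtain ⟨i, hi⟩ := card_pos.1 (Nat.zero_lt_of_lt hlt)
  obtain ⟨his, rfl⟩ := mem_filter.1 hi
  refine ⟨_, filter_subset _ _, _, mem_powerset.1 hT, hlt.le, hb i his, ?_⟩
  intro j hj x hx
  rw [← (mem_filter.1 hj).2] at hx
  exact ((mem_bipartiteAbove r).1 hx).2

theorem add_card_le_mul_card_filter_le_card_bipartiteBelow {d l : ℕ} (hd : 0 < d) (hl : 0 < l)
    (hs : #s = d * l) (hdense : ∀ i ∈ s, #t < d * #(t.bipartiteAbove r i)) :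
    l + #t ≤ d * l * #{x ∈ t | l ≤ #(s.bipartiteBelow r x)} := by
  have lower : l * (#t + 1) ≤ ∑ x ∈ t, #(s.bipartiteBelow r x) := by
    rw [← sum_card_bipartiteAbove_eq_sum_card_bipartiteBelow]
    refine Nat.le_of_mul_le_mul_left ?_ hd
    calc d * (l * (#t + 1)) = ∑ _i ∈ s, (#t + 1) := by simp [hs, mul_assoc]
      _ ≤ ∑ i ∈ s, d * #(t.bipartiteAbove r i) := sum_le_sum hdense
      _ = _ := (mul_sum _ _ _).symm
  have degree_le (x : β) : #(s.bipartiteBelow r x) + 1 ≤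
      l + if l ≤ #(s.bipartiteBelow r x) then d * l else 0 := by
    have : #(s.bipartiteBelow r x) ≤ d * l := hs ▸ card_filter_le _ _
    split_ifs <;> omega
  have upper := sum_le_sum fun x (_ : x ∈ t) => degree_le x
  simp only [sum_add_distrib, sum_const, smul_eq_mul, mul_one,
    ← sum_filter] at upper
  linarith

theorem exists_biclique_of_dense {d l k : ℕ} (hd : 0 < d) (hl : 0 < l)
    (hs : #s = d * l) (hdense : ∀ i ∈ s, #t < d * #(t.bipartiteAbove r i))
    (ht : d * l * (k * 2 ^ (d * l)) ≤ #t) :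
    ∃ S ⊆ s, ∃ T ⊆ t, l ≤ #S ∧ k ≤ #T ∧ ∀ i ∈ S, ∀ x ∈ T, r i x := by
  have hpopular := add_card_le_mul_card_filter_le_card_bipartiteBelow hd hl hs hdense
  obtain ⟨T, hT, S, hS, hkT, hlS, hr⟩ := exists_biclique_of_mul_two_pow_lt
    (r := Function.swap r) (s := {x ∈ t | l ≤ #(s.bipartiteBelow r x)}) (t := s) (a := k) (b := l)
    (by rw [hs]; exact Nat.lt_of_mul_lt_mul_left (a := d * l) (by omega))
    (fun x hx => (mem_filter.1 hx).2)
  exact ⟨S, hS, T, hT.trans (filter_subset _ _), hlS, hkT, fun i hi x hx => hr x hx i hi⟩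

end Biclique

section Block

open List

variable {α : Type*}

/-- The `i`-th block of `u` when `u` is cut into consecutive blocks of length `q`, counting from
`0`; it is shorter than `q`, possibly empty, where `u` runs out. -/
def block (q : ℕ) (u : List α) (i : ℕ) : List α := (u.drop (i * q)).take q

theorem block_infix (q : ℕ) (u : List α) (i : ℕ) : block q u i <:+: u :=
  (take_prefix _ _).isInfix.trans (drop_suffix _ _).isInfix

theorem length_block {q M i : ℕ} {u : List α} (hu : M * q ≤ u.length) (hi : i < M) :
    (block q u i).length = q := by
  have : (i + 1) * q ≤ M * q := Nat.mul_le_mul_right q hi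
  rw [block, length_take, length_drop]
  grind

theorem flatten_map_block_range (q : ℕ) (u : List α) (M : ℕ) :
    ((List.range M).map (block q u)).flatten = u.take (M * q) := by
  induction M with
  | zero => simp
  | succ M ih => simp [List.range_succ, ih, block, Nat.succ_mul, take_add]

theorem flatten_map_block_filter_sublist (q : ℕ) (u : List α) (M : ℕ) (p : ℕ → Bool) :
    (((List.range M).filter p).map (block q u)).flatten <+ u := by
  refine ((List.filter_sublist.map _).flatten).trans ?_
  exact flatten_map_block_range q u M ▸ take_sublist _ _

variable [DecidableEq α]

theorem bipartiteAbove_mem_block (q : ℕ) (u : List α) (i : ℕ) :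
    u.toFinset.bipartiteAbove (fun i x => x ∈ block q u i) i = (block q u i).toFinset := by
  ext x
  simpa using fun hx => (block_infix q u i).subset hx

end Block

section Formation

open Finset List

variable {α : Type*} [DecidableEq α] {k K l : ℕ} {u w : List α}

/-- `u` contains a `(k, l)`-formation: at least `l` disjoint consecutive pieces, up to deletion of
letters, that have at least `k` letters in common. -/
def HasFormation (k l : ℕ) (u : List α) : Prop :=
  ∃ (S : Finset α) (L : List (List α)), k ≤ #S ∧ l ≤ L.length ∧
    (∀ b ∈ L, S ⊆ b.toFinset) ∧ L.flatten <+ u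

/-- Every factor of `u` of length at least `K` has at least `k` distinct letters: a form of
sparseness that does not refer to positions. -/
def IsSpread (k K : ℕ) (u : List α) : Prop :=
  ∀ w, w <:+: u → K ≤ w.length → k ≤ #w.toFinset

theorem HasFormation.mono_sublist (h : HasFormation k l w) (hwu : w <+ u) : HasFormation k l u :=
  let ⟨S, L, hS, hL, hSL, hLw⟩ := h
  ⟨S, L, hS, hL, hSL, hLw.trans hwu⟩

theorem IsSpread.of_infix (h : IsSpread k K u) (hwu : w <:+: u) : IsSpread k K w :=
  fun x hx => h x (hx.trans hwu)

theorem hasFormation_of_forall_mem_block {q M : ℕ} {I : Finset ℕ} {S : Finset α}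
    (hI : I ⊆ Finset.range M) (hl : l ≤ #I) (hk : k ≤ #S)
    (hmem : ∀ i ∈ I, ∀ x ∈ S, x ∈ block q u i) : HasFormation k l u := by
  refine ⟨S, ((List.range M).filter (· ∈ I)).map (block q u), hk, ?_, ?_,
    flatten_map_block_filter_sublist q u M _⟩
  · have hfilter : ((List.range M).filter (· ∈ I)).toFinset = I := by
      ext i
      simpa using fun hi => Finset.mem_range.1 (hI hi)
    rw [length_map]
    calc l ≤ #I := hl
      _ = #((List.range M).filter (· ∈ I)).toFinset := by rw [hfilter]
      _ ≤ _ := toFinset_card_le _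
  · simp only [List.mem_map, List.mem_filter, decide_eq_true_eq]
    rintro _ ⟨i, ⟨-, hi⟩, rfl⟩ x hx
    exact mem_toFinset.2 (hmem i hi x hx)

theorem IsSpread.hasFormation_of_le_length (hu : IsSpread k K u)
    (hlen : (l * 2 ^ #u.toFinset + 1) * K ≤ u.length) : HasFormation k l u := by
  obtain ⟨I, hI, S, -, hl, hk, hmem⟩ := exists_biclique_of_mul_two_pow_lt
    (r := fun i x => x ∈ block K u i) (s := Finset.range (l * 2 ^ #u.toFinset + 1))
    (t := u.toFinset) (a := l) (b := k) (by simp) (by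
      intro i hi
      rw [bipartiteAbove_mem_block]
      exact hu _ (block_infix K u i) (length_block hlen (Finset.mem_range.1 hi)).ge)
  exact hasFormation_of_forall_mem_block hI hl hk hmem

theorem exists_block_few_letters_of_not_hasFormation {d : ℕ} (hd : 0 < d) (hl : 0 < l)
    (hfree : ¬ HasFormation k l u) (hcard : d * l * (k * 2 ^ (d * l)) ≤ #u.toFinset) (q : ℕ) :
    ∃ i < d * l, d * #(block q u i).toFinset ≤ #u.toFinset := by
  by_contra! hdense
  obtain ⟨I, hI, S, -, hl, hk, hmem⟩ := exists_biclique_of_dense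
    (r := fun i x => x ∈ block q u i) (s := Finset.range (d * l)) hd hl (card_range _)
    (fun i hi => bipartiteAbove_mem_block q u i ▸ hdense i (Finset.mem_range.1 hi)) hcard
  exact hfree (hasFormation_of_forall_mem_block hI hl hk hmem)

theorem length_lt_mul_sq_of_forall_infix {c : ℕ} (hc : 0 < c) (hl : 2 ≤ l)
    (hfree : ¬ HasFormation k l u) (hlu : l ≤ #u.toFinset)
    (hcard : l * l * (k * 2 ^ (l * l)) ≤ #u.toFinset)
    (ih : ∀ w, w <:+: u → w ≠ [] → w.length < u.length → w.length < c * #w.toFinset ^ 2) :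
    u.length < c * #u.toFinset ^ 2 := by
  set n := #u.toFinset
  by_contra! hlong
  set q := c * (n / l) ^ 2 with hq
  have hqpos : 0 < q := Nat.mul_pos hc (pow_pos (Nat.div_pos hlu (by omega)) 2)
  have hblocks : l * l * q ≤ u.length := by
    calc l * l * q = c * (l * (n / l)) ^ 2 := by rw [hq]; ring
      _ ≤ c * n ^ 2 := by gcongr; exact Nat.mul_div_le n l
      _ ≤ u.length := hlong
  obtain ⟨i, hi, hfew⟩ :=
    exists_block_few_letters_of_not_hasFormation (by omega) (by omega) hfree hcard q
  have hlen := length_block hblocks hi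
  refine (ih (block q u i) (block_infix q u i) (ne_nil_of_length_pos (by omega)) ?_).not_ge ?_
  · nlinarith
  · calc c * #(block q u i).toFinset ^ 2 ≤ c * (n / l) ^ 2 := by
          gcongr
          rwa [Nat.le_div_iff_mul_le (by omega), mul_comm]
      _ = (block q u i).length := hlen.symm

theorem exists_length_lt_mul_sq_of_not_hasFormation (k K : ℕ) (hl : 2 ≤ l) :
    ∃ c, ∀ u : List α, u ≠ [] → IsSpread k K u → ¬ HasFormation k l u →
      u.length < c * #u.toFinset ^ 2 := by
  set N := l * l * (k * 2 ^ (l * l)) + l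
  set c := (l * 2 ^ N + 1) * K + 1
  refine ⟨c, fun u => ?_⟩
  induction hm : u.length using Nat.strong_induction_on generalizing u with
  | _ m ih =>
  subst hm
  intro hne hspread hfree
  rcases le_total #u.toFinset N with hsmall | hlarge
  · have hshort : u.length < (l * 2 ^ #u.toFinset + 1) * K := by
      by_contra! hlong
      exact hfree (hspread.hasFormation_of_le_length hlong)
    have hpos : 0 < #u.toFinset := Finset.card_pos.2 ((toFinset_nonempty_iff u).2 hne)
    calc u.length < (l * 2 ^ #u.toFinset + 1) * K := hshort
      _ ≤ (l * 2 ^ N + 1) * K := by gcongr; norm_num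
      _ ≤ c * 1 ^ 2 := by omega
      _ ≤ c * #u.toFinset ^ 2 := by gcongr; exact hpos
  · refine length_lt_mul_sq_of_forall_infix (Nat.succ_pos _) hl hfree (by omega) (by omega) ?_
    exact fun w hwu hwne hlt => ih _ hlt w rfl hwne (hspread.of_infix hwu)
      fun hw => hfree (hw.mono_sublist hwu.sublist)

theorem sublist_flatten_of_length_le {S : Finset α} :
    ∀ {w : List α} {L : List (List α)}, w.length ≤ L.length → (∀ a ∈ w, a ∈ S) →
      (∀ b ∈ L, S ⊆ b.toFinset) → w <+ L.flatten
  | [], _, _, _, _ => nil_sublist _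
  | _ :: _, [], hlen, _, _ => by simp at hlen
  | a :: w, b :: L, hlen, hw, hL => by
    rw [List.forall_mem_cons] at hw hL
    have hab : a ∈ b := mem_toFinset.1 (hL.1 hw.1)
    exact (singleton_sublist.2 hab).append
      (sublist_flatten_of_length_le (Nat.le_of_succ_le_succ hlen) hw.2 hL.2)

end Formation

theorem exists_perm_forall_mem {α : Type*} {s t : Finset α} (h : #s ≤ #t) :
    ∃ σ : Equiv.Perm α, ∀ x ∈ s, σ x ∈ t := by
  classical
  obtain ⟨t', ht', hcard⟩ := Finset.exists_subset_card_eq h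
  obtain ⟨σ, hσ⟩ := (Set.powersetCard.isPretransitive (n := #s)).exists_smul_eq
    (⟨s, rfl⟩ : Set.powersetCard α #s) ⟨t', hcard⟩
  refine ⟨σ, fun x hx => ht' ?_⟩
  have himage : s.image σ = t' := congrArg Subtype.val hσ
  exact himage ▸ Finset.mem_image_of_mem σ hx

theorem HasFormation.contains {u v : List ℕ} {k l : ℕ} (h : HasFormation k l u)
    (hk : #v.toFinset ≤ k) (hl : v.length ≤ l) : Contains u v := by
  obtain ⟨S, L, hS, hL, hSL, hLu⟩ := h
  obtain ⟨σ, hσ⟩ := exists_perm_forall_mem (hk.trans hS)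
  refine ⟨v.map σ, (sublist_flatten_of_length_le ?_ ?_ hSL).trans hLu, σ.symm, by simp⟩
  · simpa using hl.trans hL
  · simpa using hσ

theorem ArithSparse.isSpread {k r : ℕ} {u : List ℕ} (hr : 1 ≤ r) (h : ArithSparse k r u) :
    IsSpread k (k * r) u := by
  rintro w ⟨x, y, rfl⟩ hw
  have hlt {a : ℕ} (ha : a < k) : a * r < w.length :=
    (Nat.mul_lt_mul_of_pos_right ha hr).trans_le hw
  have hget {a : ℕ} (ha : a < k) :
      (x ++ w ++ y).getD (x.length + a * r) 0 = w.getD (a * r) 0 := by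
    grind
  have hne {a b : ℕ} (hab : a < b) (hb : b < k) : w.getD (a * r) 0 ≠ w.getD (b * r) 0 := by
    rw [← hget (hab.trans hb), ← hget hb]
    exact h x.length a b hab hb (by simp only [List.length_append]; have := hlt hb; omega)
  calc k = #(Finset.range k) := (Finset.card_range k).symm
    _ ≤ #w.toFinset := Finset.card_le_card_of_injOn (fun a => w.getD (a * r) 0) ?_ ?_
  · intro a ha
    have := hlt (Finset.mem_range.1 ha)
    simp [this]
  · intro a ha b hb hab
    rw [Finset.coe_range, Set.mem_Iio] at ha hb
    rcases lt_trichotomy a b with hlt | heq | hgt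
    · exact absurd hab (hne hlt hb)
    · exact heq
    · exact absurd hab.symm (hne hgt ha)

theorem stmt_3 (v : List ℕ) (k r : ℕ) (hk : v.toFinset.card ≤ k) (hr : 1 ≤ r) :
    ∃ c : ℕ, 0 < c ∧ ∀ n : ℕ, 1 ≤ n → Ex v k r n ≤ c * n ^ 2 := by
  obtain ⟨c, hc⟩ := exists_length_lt_mul_sq_of_not_hasFormation (α := ℕ) (l := v.length + 2)
    k (k * r) (by omega)
  refine ⟨c + 1, c.succ_pos, fun n _ => csSup_le' ?_⟩
  rintro _ ⟨u, rfl, hfree, hsparse, hcard⟩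
  rcases eq_or_ne u [] with rfl | hne
  · simp
  have hno_formation : ¬ HasFormation k (v.length + 2) u :=
    fun h => hfree (h.contains hk (by omega))
  calc u.length ≤ c * u.toFinset.card ^ 2 := (hc u hne (hsparse.isSpread hr) hno_formation).le
    _ ≤ (c + 1) * n ^ 2 := by gcongr; omega
end

section
/- Let a ≠ b be two letters, k ≥ 2 and r ≥ 1. Then Ex_r(abab,k,n) = r·n if 1 ≤ n ≤ k-1, and Ex_r(abab,k,n) = r·(2n-k+1) if n ≥ k. -/
/-!
Call a position a repeat if its letter has occurred earlier. Take an `abab`-free word on `n` letters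
in which any `k` consecutive letters are distinct. Each of the `k - 1` positions before a repeat `q`
holds the last occurrence of its letter: a letter that came back would do so after `q`, and would
alternate with the two copies of the letter at `q`. So the predecessors of the repeats, the other
`k - 2` positions in the window before the first repeat, and the last position of the word are
distinct last occurrences, giving `#repeats + (k - 1) ≤ n`; there are also at most `n` first
occurrences. This settles `r = 1`. For general `r`, restrict the word to the multiples of `r`;
conversely, replace each letter of an extremal word for `r = 1` by a block of `r` copies.
-/

/-- The word `f 0, ..., f (m - 1)` contains no alternation `x y x y` of distinct letters. The weak
inequalities add nothing for distinct letters, and make the notion stable under monotone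
reindexing. -/
def AlternationFree {α : Type*} (f : ℕ → α) (m : ℕ) : Prop :=
  ∀ ⦃p q s t⦄, p ≤ q → q ≤ s → s ≤ t → t < m → f p = f s → f q = f t → f p = f q

/-- Any `k` consecutive letters of the word `f 0, ..., f (m - 1)` are pairwise distinct: this is
`(k, 1)`-sparsity. -/
def WindowInjective {α : Type*} (k : ℕ) (f : ℕ → α) (m : ℕ) : Prop :=
  ∀ ⦃i j⦄, i < j → j < i + k → j < m → f i ≠ f j

/-- The positions below `m` holding a letter of `f` for the first time. -/
def firstOccurrences {α : Type*} [DecidableEq α] (f : ℕ → α) (m : ℕ) : Finset ℕ :=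
  {q ∈ Finset.range m | ∀ p < q, f p ≠ f q}

/-- The positions below `m` holding a letter of `f` that occurred before. -/
def repeats {α : Type*} [DecidableEq α] (f : ℕ → α) (m : ℕ) : Finset ℕ :=
  {q ∈ Finset.range m | ∃ p < q, f p = f q}

/-- The positions below `m` holding a letter of `f` that does not occur again below `m`. -/
def lastOccurrences {α : Type*} [DecidableEq α] (f : ℕ → α) (m : ℕ) : Finset ℕ :=
  {i ∈ Finset.range m | ∀ j < m, i < j → f i ≠ f j}

/-- The word `0, 1, ..., n - 1, n - k, n - k - 1, ..., 0`, extremal for `r = 1`. Its letters from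
position `n` on are meaningful up to position `2 * n - k`. -/
def mountainWord (n k i : ℕ) : ℕ := if i < n then i else 2 * n - k - i

/-- The word `f 0, ..., f (m - 1)` with each letter replaced by a block of `r` copies of it. -/
def blowUp {α : Type*} (r : ℕ) (f : ℕ → α) (m : ℕ) : List α :=
  (List.range (r * m)).map fun i => f (i / r)

theorem WindowInjective.add_le_of_eq {α : Type*} {f : ℕ → α} {k m i j : ℕ}
    (hsparse : WindowInjective k f m) (hij : i < j) (hj : j < m) (heq : f i = f j) : i + k ≤ j :=
  not_lt.1 fun hjk => hsparse hij hjk hj heq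

section Counting

variable {α : Type*} [DecidableEq α] {f : ℕ → α} {k m q : ℕ}

theorem card_firstOccurrences_add_card_repeats (f : ℕ → α) (m : ℕ) :
    (firstOccurrences f m).card + (repeats f m).card = m := by
  have hrepeats : repeats f m = {q ∈ Finset.range m | ¬∀ p < q, f p ≠ f q} := by
    simp only [repeats, ne_eq, not_forall, not_not, exists_prop]
  rw [hrepeats, firstOccurrences, Finset.card_filter_add_card_filter_not, Finset.card_range]

theorem card_le_card_image_range_of_lt_imp_ne {s : Finset ℕ} (hs : s ⊆ Finset.range m)
    (hne : ∀ i ∈ s, ∀ j ∈ s, i < j → f i ≠ f j) :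
    s.card ≤ ((Finset.range m).image f).card := by
  have hinj : Set.InjOn f s :=
    Set.injOn_iff_injective.2 <| .of_lt_imp_ne fun i j hij => hne i i.2 j j.2 hij
  rw [← Finset.card_image_of_injOn hinj]
  exact Finset.card_le_card (Finset.image_subset_image hs)

theorem card_firstOccurrences_le (f : ℕ → α) (m : ℕ) :
    (firstOccurrences f m).card ≤ ((Finset.range m).image f).card :=
  card_le_card_image_range_of_lt_imp_ne (Finset.filter_subset _ _)
    fun i _ _ hj hij => (Finset.mem_filter.1 hj).2 i hij

theorem card_lastOccurrences_le (f : ℕ → α) (m : ℕ) :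
    (lastOccurrences f m).card ≤ ((Finset.range m).image f).card :=
  card_le_card_image_range_of_lt_imp_ne (Finset.filter_subset _ _) fun _ hi j hj hij =>
    (Finset.mem_filter.1 hi).2 j (Finset.mem_range.1 (Finset.mem_filter.1 hj).1) hij

theorem lt_of_mem_repeats (hq : q ∈ repeats f m) : q < m :=
  Finset.mem_range.1 (Finset.mem_filter.1 hq).1

theorem WindowInjective.le_of_mem_repeats (hsparse : WindowInjective k f m)
    (hq : q ∈ repeats f m) : k ≤ q := by
  obtain ⟨p, hpq, heq⟩ := (Finset.mem_filter.1 hq).2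
  exact le_of_add_le_right (hsparse.add_le_of_eq hpq (lt_of_mem_repeats hq) heq)

theorem AlternationFree.mem_lastOccurrences_of_mem_repeats (hfree : AlternationFree f m)
    (hsparse : WindowInjective k f m) (hq : q ∈ repeats f m) {i : ℕ} (hiq : i < q)
    (hqi : q < i + k) : i ∈ lastOccurrences f m := by
  have hqm := lt_of_mem_repeats hq
  obtain ⟨p, hpq, hp⟩ := (Finset.mem_filter.1 hq).2
  refine Finset.mem_filter.2 ⟨Finset.mem_range.2 (hiq.trans hqm), fun j hj hij heq => ?_⟩
  have hpi : p + k ≤ q := hsparse.add_le_of_eq hpq hqm hp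
  have hqj : i + k ≤ j := hsparse.add_le_of_eq hij hj heq
  have hfpi : f p = f i := hfree (by omega) hiq.le (by omega) hj hp heq
  exact hsparse hiq hqi hqm (hfpi.symm.trans hp)

theorem AlternationFree.subset_image_succ_lastOccurrences (hfree : AlternationFree f m)
    (hsparse : WindowInjective k f m) (hk : 2 ≤ k) (hq : q ∈ repeats f m) :
    insert m (Finset.Ico (q + 2 - k) q ∪ repeats f m) ⊆
      (lastOccurrences f m).image Nat.succ := by
  have hmem {i x : ℕ} (hi : i ∈ lastOccurrences f m) (hx : i + 1 = x) :
      x ∈ (lastOccurrences f m).image Nat.succ := Finset.mem_image.2 ⟨i, hi, hx⟩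
  have hqm := lt_of_mem_repeats hq
  have hkq := hsparse.le_of_mem_repeats hq
  intro x hx
  simp only [Finset.mem_insert, Finset.mem_union, Finset.mem_Ico] at hx
  obtain rfl | hx | hx := hx
  · have hlast : x - 1 ∈ lastOccurrences f x :=
      Finset.mem_filter.2 ⟨Finset.mem_range.2 (by omega), fun j hj hij => by omega⟩
    exact hmem hlast (by omega)
  · exact hmem (hfree.mem_lastOccurrences_of_mem_repeats hsparse hq (i := x - 1)
      (by omega) (by omega)) (by omega)
  · have hkx := hsparse.le_of_mem_repeats hx
    exact hmem (hfree.mem_lastOccurrences_of_mem_repeats hsparse hx (i := x - 1)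
      (by omega) (by omega)) (by omega)

theorem AlternationFree.card_repeats_add_le (hfree : AlternationFree f m)
    (hsparse : WindowInjective k f m) (hk : 2 ≤ k) (hne : (repeats f m).Nonempty) :
    (repeats f m).card + (k - 1) ≤ (lastOccurrences f m).card := by
  set q := (repeats f m).min' hne
  have hq : q ∈ repeats f m := Finset.min'_mem _ _
  have hqm := lt_of_mem_repeats hq
  have hkq := hsparse.le_of_mem_repeats hq
  have hdisjoint : Disjoint (Finset.Ico (q + 2 - k) q) (repeats f m) :=
    Finset.disjoint_left.2 fun x hx hx' =>
      (Finset.min'_le _ _ hx').not_gt (Finset.mem_Ico.1 hx).2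
  have hm : m ∉ Finset.Ico (q + 2 - k) q ∪ repeats f m := by
    rw [Finset.mem_union, Finset.mem_Ico]
    rintro (h | h)
    · omega
    · exact (lt_of_mem_repeats h).false
  have hcard := (Finset.card_le_card
    (hfree.subset_image_succ_lastOccurrences hsparse hk hq)).trans Finset.card_image_le
  rw [Finset.card_insert_of_notMem hm, Finset.card_union_of_disjoint hdisjoint,
    Nat.card_Ico] at hcard
  omega

/-- The truncated subtraction covers words with fewer than `k` distinct letters, which have no
repeats. -/
theorem AlternationFree.length_le (hfree : AlternationFree f m) (hsparse : WindowInjective k f m)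
    (hk : 2 ≤ k) :
    m ≤ ((Finset.range m).image f).card + (((Finset.range m).image f).card + 1 - k) := by
  have hsum := card_firstOccurrences_add_card_repeats f m
  have hfirst := card_firstOccurrences_le f m
  have hlast := card_lastOccurrences_le f m
  rcases (repeats f m).eq_empty_or_nonempty with hempty | hne
  · rw [hempty, Finset.card_empty] at hsum
    omega
  · have hrepeats := hfree.card_repeats_add_le hsparse hk hne
    omega

end Counting

section AlternationFree

variable {α : Type*} {f g : ℕ → α} {m m' : ℕ}

theorem AlternationFree.of_eqOn_comp (hf : AlternationFree f m) {φ : ℕ → ℕ} (hφ : Monotone φ)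
    (hmaps : Set.MapsTo φ (Set.Iio m') (Set.Iio m)) (hg : Set.EqOn g (f ∘ φ) (Set.Iio m')) :
    AlternationFree g m' := by
  intro p q s t hpq hqs hst ht hps hqt
  have hs : s < m' := hst.trans_lt ht
  have hq : q < m' := hqs.trans_lt hs
  have hp : p < m' := hpq.trans_lt hq
  rw [hg hp, hg hs] at hps
  rw [hg hq, hg ht] at hqt
  rw [hg hp, hg hq]
  exact hf (hφ hpq) (hφ hqs) (hφ hst) (hmaps ht) hps hqt

theorem alternationFree_iff_forall_lt :
    AlternationFree f m ↔
      ∀ p q s t, p < q → q < s → s < t → t < m → f p = f s → f q = f t → f p = f q := by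
  constructor
  · exact fun hfree p q s t hpq hqs hst => hfree hpq.le hqs.le hst.le
  · intro hfree p q s t hpq hqs hst ht hps hqt
    by_contra hne
    have hpq : p < q := hpq.lt_of_ne (by rintro rfl; exact hne rfl)
    have hqs : q < s := hqs.lt_of_ne (by rintro rfl; exact hne hps)
    have hst : s < t := hst.lt_of_ne (by rintro rfl; exact hne (hps.trans hqt.symm))
    exact hne (hfree p q s t hpq hqs hst ht hps hqt)

theorem alternationFree_of_strictMonoOn_of_strictAntiOn [Preorder α] {n : ℕ}
    (hmono : StrictMonoOn f (Set.Iio n)) (hanti : StrictAntiOn f (Set.Ico n m)) :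
    AlternationFree f m := by
  refine alternationFree_iff_forall_lt.2 fun p q s t hpq hqs hst ht hps hqt => ?_
  exfalso
  have hps' : p < s := hpq.trans hqs
  have hqt' : q < t := hqs.trans hst
  have hsm : s < m := hst.trans ht
  have hns : n ≤ s := not_lt.1 fun hsn => (hmono (hps'.trans hsn) hsn hps').ne hps
  have hqn : q < n := not_le.1 fun hnq =>
    (hanti ⟨hnq, hqt'.trans ht⟩ ⟨hnq.trans hqt'.le, ht⟩ hqt').ne hqt.symm
  have hup : f p < f q := hmono (hpq.trans hqn) hqn hpq
  have hdown : f t < f s := hanti ⟨hns, hsm⟩ ⟨hns.trans hst.le, ht⟩ hst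
  rw [hps, hqt] at hup
  exact lt_asymm hup hdown

theorem alternationFree_getD_iff {u : List α} {d : α} :
    AlternationFree (u.getD · d) u.length ↔ ∀ x y, [x, y, x, y].Sublist u → x = y := by
  constructor
  · intro hfree x y hsub
    obtain ⟨positions, hletters, hsorted⟩ := List.sublist_eq_map_getElem hsub
    obtain ⟨p, _, rfl, rfl, q, _, rfl, rfl, s, _, rfl, hps, t, _, rfl, hqt, -⟩ := by
      simpa only [List.map_eq_cons_iff] using hletters.symm
    obtain ⟨hpq, hqs, hst, -⟩ := by
      simpa only [List.isChain_cons_cons] using hsorted.isChain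
    have hgetD (i : Fin u.length) : u.getD i d = u[i] := List.getD_eq_getElem _ _ i.2
    simpa only [hgetD] using hfree (p := p) (q := q) hpq.le hqs.le hst.le t.2
      (by simp only [hgetD, hps]) (by simp only [hgetD, hqt])
  · refine fun hsub => alternationFree_iff_forall_lt.2 fun p q s t hpq hqs hst ht hps hqt => ?_
    beta_reduce at hps hqt
    have hs : s < u.length := hst.trans ht
    have hq : q < u.length := hqs.trans hs
    have hp : p < u.length := hpq.trans hq
    have hsorted : [(⟨p, hp⟩ : Fin u.length), ⟨q, hq⟩, ⟨s, hs⟩, ⟨t, ht⟩].Pairwise (· < ·) := by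
      simpa [← List.isChain_iff_pairwise] using ⟨hpq, hqs, hst⟩
    have hletters : [u.getD p d, u.getD q d, u.getD s d, u.getD t d].Sublist u := by
      rw [List.getD_eq_getElem _ _ hp, List.getD_eq_getElem _ _ hq, List.getD_eq_getElem _ _ hs,
        List.getD_eq_getElem _ _ ht]
      exact List.map_getElem_sublist hsorted
    rw [← hps, ← hqt] at hletters
    exact hsub _ _ hletters

end AlternationFree

theorem contains_abab_iff {a b : ℕ} (hab : a ≠ b) {u : List ℕ} :
    Contains u [a, b, a, b] ↔ ∃ x y, x ≠ y ∧ [x, y, x, y].Sublist u := by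
  constructor
  · rintro ⟨w, hw, β, hβ⟩
    have hw' : w = [β.symm a, β.symm b, β.symm a, β.symm b] := by
      simpa using (congrArg (List.map β.symm) hβ).symm
    exact ⟨_, _, β.symm.injective.ne hab, hw' ▸ hw⟩
  · rintro ⟨x, y, hxy, hsub⟩
    obtain ⟨β, hx, hy⟩ := MulAction.is_two_pretransitive_iff.1
      (Equiv.Perm.isMultiplyPretransitive ℕ 2) hxy hab
    exact ⟨_, hsub, β, by simp_all⟩

theorem not_contains_abab_iff {a b : ℕ} (hab : a ≠ b) {u : List ℕ} :
    ¬Contains u [a, b, a, b] ↔ AlternationFree (u.getD · 0) u.length := by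
  rw [contains_abab_iff hab, alternationFree_getD_iff]
  simp only [ne_eq, not_exists, not_and, not_imp_not]

section UpperBound

variable {k r m : ℕ} {u : List ℕ}

theorem ArithSparse.windowInjective_getD_mul (hu : ArithSparse k r u)
    (hm : ∀ i < m, i * r < u.length) : WindowInjective k (fun i => u.getD (i * r) 0) m := by
  intro i j hij hjk hj
  have hindex : i * r + (j - i) * r = j * r := by rw [← add_mul, Nat.add_sub_cancel' hij.le]
  have hne := hu (i * r) 0 (j - i) (Nat.sub_pos_of_lt hij) (by omega)
    (by rw [hindex]; exact hm j hj)
  rwa [zero_mul, add_zero, hindex] at hne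

theorem image_getD_subset_toFinset {φ : ℕ → ℕ} (hm : ∀ i < m, φ i < u.length) :
    (Finset.range m).image (fun i => u.getD (φ i) 0) ⊆ u.toFinset := by
  refine Finset.image_subset_iff.2 fun i hi => List.mem_toFinset.2 ?_
  rw [List.getD_eq_getElem _ _ (hm i (Finset.mem_range.1 hi))]
  exact List.getElem_mem _

theorem ArithSparse.length_le_of_not_contains_abab {a b n : ℕ} (hab : a ≠ b) (hk : 2 ≤ k)
    (hsparse : ArithSparse k r u) (hfree : ¬Contains u [a, b, a, b])
    (hcard : u.toFinset.card ≤ n) : u.length ≤ r * (n + (n + 1 - k)) := by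
  by_contra! hlong
  have hm : ∀ i < n + (n + 1 - k) + 1, i * r < u.length := fun i hi =>
    (Nat.mul_comm i r ▸ Nat.mul_le_mul_left r (Nat.le_of_lt_succ hi)).trans_lt hlong
  have hsample : AlternationFree (fun i => u.getD (i * r) 0) (n + (n + 1 - k) + 1) :=
    ((not_contains_abab_iff hab).1 hfree).of_eqOn_comp (φ := (· * r))
      (fun _ _ h => Nat.mul_le_mul_right r h) hm fun _ _ => rfl
  have hlength := hsample.length_le (hsparse.windowInjective_getD_mul hm) hk
  have hletters := Finset.card_le_card (image_getD_subset_toFinset hm)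
  omega

end UpperBound

section MountainWord

variable {n k : ℕ}

theorem alternationFree_mountainWord :
    AlternationFree (mountainWord n k) (n + (n + 1 - k)) := by
  have hmono : StrictMonoOn (mountainWord n k) (Set.Iio n) := by
    intro i hi j hj hij
    rwa [mountainWord, mountainWord, if_pos (Set.mem_Iio.1 hi), if_pos (Set.mem_Iio.1 hj)]
  have hanti : StrictAntiOn (mountainWord n k) (Set.Ico n (n + (n + 1 - k))) := by
    rintro i ⟨hi, -⟩ j ⟨hj, hjm⟩ hij
    rw [mountainWord, mountainWord, if_neg hi.not_gt, if_neg hj.not_gt]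
    omega
  exact alternationFree_of_strictMonoOn_of_strictAntiOn hmono hanti

theorem windowInjective_mountainWord :
    WindowInjective k (mountainWord n k) (n + (n + 1 - k)) := by
  intro i j hij hjk hj
  -- If `i < n ≤ j` carry the same letter, then `i = 2 * n - k - j ≤ j - k`.
  unfold mountainWord
  split_ifs <;> omega

theorem mountainWord_lt {i : ℕ} (hk : 0 < k) (hi : i < n + (n + 1 - k)) :
    mountainWord n k i < n := by
  unfold mountainWord
  split_ifs <;> omega

end MountainWord

section BlowUp

variable {α : Type*} {f : ℕ → α} {k r m i : ℕ}

theorem length_blowUp : (blowUp r f m).length = r * m := by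
  rw [blowUp, List.length_map, List.length_range]

theorem getD_blowUp {d : α} (hi : i < r * m) : (blowUp r f m).getD i d = f (i / r) := by
  rw [List.getD_eq_getElem _ _ (length_blowUp.symm ▸ hi)]
  simp only [blowUp, List.getElem_map, List.getElem_range]

theorem AlternationFree.blowUp (hf : AlternationFree f m) (d : α) :
    AlternationFree ((blowUp r f m).getD · d) (blowUp r f m).length := by
  rw [length_blowUp]
  exact hf.of_eqOn_comp (φ := (· / r)) (fun _ _ h => Nat.div_le_div_right h)
    (fun _ hi => Nat.div_lt_of_lt_mul hi) fun _ hi => getD_blowUp hi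

theorem WindowInjective.arithSparse_blowUp {f : ℕ → ℕ} (hf : WindowInjective k f m) :
    ArithSparse k r (blowUp r f m) := by
  intro j x y hxy hyk hy
  rw [length_blowUp] at hy
  have hr : 0 < r := Nat.pos_of_mul_pos_right (Nat.zero_lt_of_lt hy)
  have hx : j + x * r < r * m := by
    have := Nat.mul_le_mul_right r hxy.le
    omega
  have hym := Nat.div_lt_of_lt_mul hy
  rw [getD_blowUp hx, getD_blowUp hy]
  rw [Nat.add_mul_div_right _ _ hr] at hym ⊢
  rw [Nat.add_mul_div_right _ _ hr]
  exact hf (by omega) (by omega) hym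

theorem toFinset_blowUp_subset [DecidableEq α] :
    (blowUp r f m).toFinset ⊆ (Finset.range m).image f := by
  intro x hx
  obtain ⟨i, hi, rfl⟩ := List.mem_map.1 (List.mem_toFinset.1 hx)
  exact Finset.mem_image_of_mem f
    (Finset.mem_range.2 (Nat.div_lt_of_lt_mul (List.mem_range.1 hi)))

end BlowUp

theorem card_toFinset_blowUp_mountainWord_le {k : ℕ} (hk : 0 < k) (r n : ℕ) :
    (blowUp r (mountainWord n k) (n + (n + 1 - k))).toFinset.card ≤ n := by
  have hsub : (blowUp r (mountainWord n k) (n + (n + 1 - k))).toFinset ⊆ Finset.range n :=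
    toFinset_blowUp_subset.trans <| Finset.image_subset_iff.2 fun i hi =>
      Finset.mem_range.2 (mountainWord_lt hk (Finset.mem_range.1 hi))
  simpa only [Finset.card_range] using Finset.card_le_card hsub

theorem ex_abab_eq {a b k : ℕ} (hab : a ≠ b) (hk : 2 ≤ k) (r n : ℕ) :
    Ex [a, b, a, b] k r n = r * (n + (n + 1 - k)) := by
  refine IsGreatest.csSup_eq ⟨⟨blowUp r (mountainWord n k) (n + (n + 1 - k)), length_blowUp,
    (not_contains_abab_iff hab).2 (alternationFree_mountainWord.blowUp 0),
    windowInjective_mountainWord.arithSparse_blowUp,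
    card_toFinset_blowUp_mountainWord_le (by omega) r n⟩, ?_⟩
  rintro _ ⟨u, rfl, hfree, hsparse, hcard⟩
  exact hsparse.length_le_of_not_contains_abab hab hk hfree hcard

theorem stmt_5 (a b : ℕ) (hab : a ≠ b) (k r : ℕ) (hk : 2 ≤ k) (hr : 1 ≤ r) (n : ℕ) :
    (1 ≤ n → n ≤ k - 1 → Ex [a, b, a, b] k r n = r * n) ∧
    (k ≤ n → Ex [a, b, a, b] k r n = r * (2 * n + 1 - k)) := by
  rw [ex_abab_eq hab hk]
  refine ⟨fun _ hn => ?_, fun hn => ?_⟩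
  · rw [show n + (n + 1 - k) = n by omega]
  · rw [show n + (n + 1 - k) = 2 * n + 1 - k by omega]
end

section
/- Let v be a sequence that is not a blow-up of a chain, let k ≥ ||v||, and suppose n ≥ k. Then Ex_1(v,k,n) = n if and only if v is isomorphic to a sequence of the form a w a, where a is a letter and w is a chain that does not contain the letter a. -/
/-- `v` is a blow-up of a chain: `v = a₁^{s₁} a₂^{s₂} ⋯ a_m^{s_m}` where the
`aᵢ` are pairwise distinct letters and each `sᵢ ≥ 1`. -/
def IsBlowupOfChain (v : List ℕ) : Prop :=
  ∃ (a s : List ℕ), a.Nodup ∧ (∀ x ∈ s, 1 ≤ x) ∧ a.length = s.length ∧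
    v = (List.zipWith (fun x m => List.replicate m x) a s).flatten

/-!
If `v = a w a`, any repetition in a `k`-sparse sequence produces a copy of `v`: between two equal
letters there is a long enough chain to choose the middle from. Hence `v`-free `k`-sparse sequences
are chains, and their maximum length is `n`. Conversely, the sequence `0 1 ⋯ (n-1) 0` is `k`-sparse
because `k ≤ n`, and each of its subsequences is a chain or of the form `b w b`. So it is `v`-free,
of length `n + 1`, unless `v` is one of these; and a nonempty chain `v` already occurs in the first
`|v| ≤ k` letters of every long enough `k`-sparse sequence.
-/

theorem exists_perm_map_eq {α : Type*} {l₁ l₂ : List α} (h₁ : l₁.Nodup) (h₂ : l₂.Nodup)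
    (h : l₁.length = l₂.length) : ∃ β : Equiv.Perm α, l₂ = l₁.map β := by
  obtain ⟨β, hβ⟩ := (Equiv.Perm.isMultiplyPretransitive α l₁.length).exists_smul_eq
    ⟨l₁.get, h₁.injective_get⟩
    ⟨l₂.get ∘ Fin.cast h, h₂.injective_get.comp (Fin.cast_injective h)⟩
  refine ⟨β, List.ext_getElem (by simp [h]) fun i hi₂ hi₁ => ?_⟩
  have hi : i < l₁.length := h ▸ hi₂
  simpa using (DFunLike.congr_fun hβ ⟨i, hi⟩).symm

namespace Isomorphic

variable {u v : List ℕ}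

theorem symm (h : Isomorphic u v) : Isomorphic v u := by
  obtain ⟨β, rfl⟩ := h
  exact ⟨β.symm, by simp⟩

theorem nodup_iff (h : Isomorphic u v) : u.Nodup ↔ v.Nodup := by
  obtain ⟨β, rfl⟩ := h
  exact (List.nodup_map_iff β.injective).symm

end Isomorphic

theorem Contains.nodup {u v : List ℕ} (h : Contains u v) (hu : u.Nodup) : v.Nodup := by
  obtain ⟨w, hwu, hwv⟩ := h
  exact hwv.nodup_iff.mp (hu.sublist hwu)

theorem ArithSparse.of_nodup {u : List ℕ} (hu : u.Nodup) (k : ℕ) {r : ℕ} (hr : 0 < r) :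
    ArithSparse k r u := by
  intro j a b hab _ hb
  have har : a * r < b * r := Nat.mul_lt_mul_of_pos_right hab hr
  rw [List.getD_eq_getElem _ _ (by lia), List.getD_eq_getElem _ _ hb, Ne, hu.getElem_inj_iff]
  lia

theorem arithSparse_one_iff {k : ℕ} {u : List ℕ} :
    ArithSparse k 1 u ↔ ∀ w, w <:+: u → w.length ≤ k → w.Nodup := by
  constructor
  · rintro hu w ⟨s, t, rfl⟩ hwk
    rw [List.Nodup, List.pairwise_iff_getElem]
    intro a b ha hb hab
    have hne := hu s.length a b hab (hb.trans_le hwk) (by simp; lia)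
    simpa [List.getElem?_append_right, List.getElem?_append_left, ha, hb] using hne
  · intro hu j a b hab hbk hb
    rw [mul_one] at hb
    have hw : ((u.drop j).take (b + 1)).Nodup :=
      hu _ ((List.take_prefix _ _).isInfix.trans (List.drop_suffix _ _).isInfix)
        (List.length_take_le _ _ |>.trans hbk)
    have hlen : ((u.drop j).take (b + 1)).length = b + 1 := by simp; lia
    have hne := mt (hw.getElem_inj_iff (hi := by lia) (hj := by lia)).mp hab.ne
    rw [mul_one, mul_one, List.getD_eq_getElem _ _ (by lia), List.getD_eq_getElem _ _ hb]
    simpa using hne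

/-- A sequence of the form `a w a`, where `w` is a chain that does not contain the letter `a`;
the condition on `a` and `w` is encoded as `a w` being a chain. -/
def IsClosedChain {α : Type*} (u : List α) : Prop :=
  ∃ (a : α) (w : List α), (a :: w).Nodup ∧ u = a :: (w ++ [a])

namespace IsClosedChain

section

variable {α : Type*} {u w : List α}

theorem not_nodup (hu : IsClosedChain u) : ¬ u.Nodup := by
  obtain ⟨a, w, -, rfl⟩ := hu
  simp

theorem map {β : Type*} (hu : IsClosedChain u) {f : α → β} (hf : f.Injective) :
    IsClosedChain (u.map f) := by
  obtain ⟨a, w, haw, rfl⟩ := hu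
  exact ⟨f a, w.map f, haw.map hf, by simp⟩

theorem of_sublist (hu : IsClosedChain u) (hwu : w.Sublist u) (hw : ¬ w.Nodup) :
    IsClosedChain w := by
  obtain ⟨a, x, hax, rfl⟩ := hu
  have hxa : (x ++ [a]).Nodup := (List.perm_append_singleton a x).nodup_iff.mpr hax
  obtain hwx | ⟨y, rfl, hyx⟩ := List.sublist_cons_iff.mp hwu
  · exact absurd (hxa.sublist hwx) hw
  obtain ⟨z, t, rfl, hzx, hta⟩ := List.sublist_append_iff.mp hyx
  have haz : (a :: z).Nodup := hax.sublist (hzx.cons_cons a)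
  obtain rfl | rfl := List.sublist_singleton.mp hta
  · exact absurd (by simpa using haz) hw
  · exact ⟨a, z, haz, rfl⟩

theorem length_eq_card_toFinset_add_one [DecidableEq α] (hu : IsClosedChain u) :
    u.length = u.toFinset.card + 1 := by
  obtain ⟨a, w, haw, rfl⟩ := hu
  have hset : (a :: (w ++ [a])).toFinset = (a :: w).toFinset := by ext; simp
  rw [hset, List.toFinset_card_of_nodup haw]
  simp

end

variable {u v : List ℕ}

theorem isomorphic (hu : IsClosedChain u) (hv : IsClosedChain v) (h : u.length = v.length) :
    Isomorphic u v := by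
  obtain ⟨a, w, haw, rfl⟩ := hu
  obtain ⟨b, x, hbx, rfl⟩ := hv
  obtain ⟨β, hβ⟩ := exists_perm_map_eq haw hbx (by simpa using h)
  obtain ⟨rfl, rfl⟩ := List.cons_eq_cons.mp hβ
  exact ⟨β, by simp⟩

theorem arithSparse (hu : IsClosedChain u) {k : ℕ} (hk : k < u.length) : ArithSparse k 1 u := by
  obtain ⟨a, w, haw, rfl⟩ := hu
  refine arithSparse_one_iff.mpr fun x hx hxk => ?_
  obtain hpre | hinf := List.infix_cons_iff.mp hx
  · have hxaw : x <+: a :: w :=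
      List.prefix_of_prefix_length_le hpre ⟨[a], rfl⟩ (by simp at hk ⊢; lia)
    exact haw.sublist hxaw.sublist
  · exact ((List.perm_append_singleton a w).nodup_iff.mpr haw).sublist hinf.sublist

theorem of_contains (hu : IsClosedChain u) (h : Contains u v) (hv : ¬ v.Nodup) :
    IsClosedChain v := by
  obtain ⟨w, hwu, hwv⟩ := h
  have hw : IsClosedChain w := hu.of_sublist hwu (mt hwv.nodup_iff.mp hv)
  obtain ⟨β, rfl⟩ := hwv
  exact hw.map β.injective

end IsClosedChain

theorem exists_isomorphic_iff_isClosedChain {v : List ℕ} :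
    (∃ (a : ℕ) (w : List ℕ), w.Nodup ∧ a ∉ w ∧ Isomorphic v ([a] ++ w ++ [a])) ↔
      IsClosedChain v := by
  constructor
  · rintro ⟨a, w, hw, ha, hv⟩
    obtain ⟨β, rfl⟩ := hv.symm
    exact IsClosedChain.map ⟨a, w, List.nodup_cons.mpr ⟨ha, hw⟩, rfl⟩ β.injective
  · rintro ⟨a, w, haw, rfl⟩
    exact ⟨a, w, haw.of_cons, haw.notMem, Equiv.refl ℕ, by simp⟩

theorem exists_infix_of_not_nodup {α : Type*} {u : List α} (hu : ¬ u.Nodup) :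
    ∃ (a : α) (w : List α), a :: (w ++ [a]) <:+: u := by
  obtain ⟨a, ha⟩ := List.exists_duplicate_iff_not_nodup.mpr hu
  induction ha with
  | cons_mem h =>
    obtain ⟨s, t, rfl⟩ := List.append_of_mem h
    exact ⟨a, s, [], t, by simp⟩
  | cons_duplicate h ih =>
    obtain ⟨b, w, hbw⟩ := ih h.not_nodup
    exact ⟨b, w, hbw.trans (List.suffix_cons _ _).isInfix⟩

namespace ArithSparse

variable {k : ℕ} {u v : List ℕ}

-- Two occurrences of `a` in a `k`-sparse sequence enclose at least `k - 1` letters, and the first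
-- `m` of these, together with `a`, lie within `k` consecutive positions.
theorem exists_isClosedChain_sublist (hs : ArithSparse k 1 u) (hu : ¬ u.Nodup) {m : ℕ}
    (hm : m < k) : ∃ w : List ℕ, w.Sublist u ∧ IsClosedChain w ∧ w.length = m + 2 := by
  rw [arithSparse_one_iff] at hs
  obtain ⟨a, w, haw⟩ := exists_infix_of_not_nodup hu
  have hmw : m ≤ w.length := by
    by_contra! hlt
    exact absurd (hs _ haw (by simp; lia)) (by simp)
  have htake : (a :: w.take m) <:+: u := by
    refine List.IsInfix.trans (List.IsPrefix.isInfix ?_) haw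
    exact (List.prefix_cons_inj a).mpr ((List.take_prefix m w).trans (List.prefix_append _ _))
  refine ⟨a :: (w.take m ++ [a]), ?_, ⟨a, w.take m, hs _ htake (by simp; lia), rfl⟩, by simp [hmw]⟩
  exact (((List.take_sublist m w).append_right [a]).cons_cons a).trans haw.sublist

theorem contains_of_isClosedChain (hs : ArithSparse k 1 u) (hu : ¬ u.Nodup)
    (hv : IsClosedChain v) (hk : v.toFinset.card ≤ k) : Contains u v := by
  have hlen := hv.length_eq_card_toFinset_add_one
  have hcard : 0 < v.toFinset.card := by
    obtain ⟨a, w, -, rfl⟩ := hv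
    simp
  obtain ⟨w, hwu, hw, hwlen⟩ :=
    hs.exists_isClosedChain_sublist hu (m := v.toFinset.card - 1) (by lia)
  exact ⟨w, hwu, hw.isomorphic hv (by lia)⟩

theorem contains_of_nodup (hs : ArithSparse k 1 u) (hv : v.Nodup) (hk : v.length ≤ k)
    (hvu : v.length ≤ u.length) : Contains u v := by
  have htake : (u.take v.length).Nodup :=
    arithSparse_one_iff.mp hs _ (List.take_prefix _ _).isInfix
      ((List.length_take_le _ _).trans hk)
  exact ⟨u.take v.length, List.take_sublist _ _, exists_perm_map_eq htake hv (by simpa using hvu)⟩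

end ArithSparse

/-- The set of lengths whose supremum is `Ex v k r n`. -/
def exLengths (v : List ℕ) (k r n : ℕ) : Set ℕ :=
  {l | ∃ u : List ℕ,
    u.length = l ∧ ¬ Contains u v ∧ ArithSparse k r u ∧ u.toFinset.card ≤ n}

section Ex

variable {v : List ℕ} {k r n : ℕ}

-- `sSup` of an unbounded set of naturals is `0`, hence the first alternative.
theorem Ex_eq_zero_or_le_of_mem_exLengths {l : ℕ} (hl : l ∈ exLengths v k r n) :
    Ex v k r n = 0 ∨ l ≤ Ex v k r n := by
  by_cases hbdd : BddAbove (exLengths v k r n)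
  · exact .inr (le_csSup hbdd hl)
  · exact .inl (Nat.sSup_of_not_bddAbove hbdd)

theorem self_mem_exLengths_of_not_nodup (hv : ¬ v.Nodup) (hr : 0 < r) : n ∈ exLengths v k r n :=
  ⟨List.range n, List.length_range, fun h => hv (h.nodup List.nodup_range),
    .of_nodup List.nodup_range k hr,
    (List.toFinset_card_le _).trans_eq List.length_range⟩

theorem Ex_eq_of_isClosedChain (hv : IsClosedChain v) (hk : v.toFinset.card ≤ k) :
    Ex v k 1 n = n := by
  refine IsGreatest.csSup_eq ⟨self_mem_exLengths_of_not_nodup hv.not_nodup one_pos, ?_⟩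
  rintro _ ⟨u, rfl, hfree, hs, hu⟩
  have hnodup : u.Nodup := by
    by_contra hdup
    exact hfree (hs.contains_of_isClosedChain hdup hv hk)
  rwa [List.toFinset_card_of_nodup hnodup] at hu

theorem Ex_lt_length_of_nodup (hv : v.Nodup) (hne : v ≠ []) (hk : v.length ≤ k) :
    Ex v k 1 n < v.length := by
  suffices Ex v k 1 n ≤ v.length - 1 by
    have := List.length_pos_iff.mpr hne
    lia
  refine csSup_le' ?_
  rintro _ ⟨u, rfl, hfree, hs, -⟩
  by_contra! hlt
  exact hfree (hs.contains_of_nodup hv hk (by lia))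

theorem add_one_mem_exLengths_of_not_isClosedChain (hv : ¬ v.Nodup) (hv' : ¬ IsClosedChain v)
    (hn : k ≤ n) (hpos : 0 < n) : n + 1 ∈ exLengths v k 1 n := by
  obtain ⟨m, rfl⟩ := Nat.exists_eq_add_one.mpr hpos
  have hu : IsClosedChain (0 :: (List.range' 1 m ++ [0])) :=
    ⟨0, List.range' 1 m, by simp [List.nodup_range'], rfl⟩
  have hlen : (0 :: (List.range' 1 m ++ [0])).length = m + 1 + 1 := by simp
  refine ⟨_, hlen, fun h => hv' (hu.of_contains h hv), hu.arithSparse (by lia), ?_⟩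
  have := hu.length_eq_card_toFinset_add_one
  lia

theorem Ex_ne_of_not_isClosedChain (hv : ¬ v.Nodup) (hv' : ¬ IsClosedChain v) (hn : k ≤ n)
    (hpos : 0 < n) : Ex v k 1 n ≠ n := by
  have hmem : n + 1 ∈ exLengths v k 1 n :=
    add_one_mem_exLengths_of_not_isClosedChain hv hv' hn hpos
  have := Ex_eq_zero_or_le_of_mem_exLengths hmem
  lia

end Ex

theorem stmt_11_general (v : List ℕ) (hv : v ≠ []) (k n : ℕ)
    (hk : v.toFinset.card ≤ k) (hn : k ≤ n) :
    Ex v k 1 n = n ↔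
      ∃ (a : ℕ) (w : List ℕ), w.Nodup ∧ a ∉ w ∧ Isomorphic v ([a] ++ w ++ [a]) := by
  rw [exists_isomorphic_iff_isClosedChain]
  refine ⟨fun hEx => ?_, fun hclosed => Ex_eq_of_isClosedChain hclosed hk⟩
  by_contra hclosed
  by_cases hnodup : v.Nodup
  · rw [List.toFinset_card_of_nodup hnodup] at hk
    have hlt : Ex v k 1 n < v.length := Ex_lt_length_of_nodup hnodup hv hk
    lia
  · have hcard : 0 < v.toFinset.card := Finset.card_pos.mpr (List.toFinset_nonempty_iff v |>.mpr hv)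
    exact Ex_ne_of_not_isClosedChain hnodup hclosed hn (by lia) hEx

theorem stmt_11 (v : List ℕ) (hv : ¬ IsBlowupOfChain v) (k n : ℕ)
    (hk : v.toFinset.card ≤ k) (hn : k ≤ n) :
    Ex v k 1 n = n ↔
      ∃ (a : ℕ) (w : List ℕ), w.Nodup ∧ a ∉ w ∧ Isomorphic v ([a] ++ w ++ [a]) := by
  refine stmt_11_general v ?_ k n hk hn
  rintro rfl
  exact hv ⟨[], [], by simp⟩
end

section
/- Let v be a sequence that is not a blow-up of a chain, let k ≥ ||v||, r ≥ 1, and suppose n ≥ k. If Ex_r(v,k,n) = r·n, then v is isomorphic to a sequence of the form a w a, where a is a letter and w is a blow-up of a chain that does not contain the letter a. -/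
/-!
The periodic word `0^r 1^r ⋯ (n-1)^r 0^r 1^r ⋯` is `(k, r)`-sparse, so each of its windows of length
`r * n + 1` is too long to be `v`-free. A window of length `r * n` that starts at a block boundary
has no subsequence `a b a` with `a ≠ b`. Comparing `v` with the windows of length `r * n + 1` that
start at a block boundary and one letter before it, we see that `v` loses all its `a b a`
subsequences when its last letter, or its first letter, is deleted. A word without `a b a` is a
blow-up of a chain, so `v` does contain some `a b a`; its two letters `a` must then be the first and
the last letter of `v`.
-/

/-- The word `v` has no subsequence `a b a` with `a ≠ b`: an intrinsic description of blow-ups of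
chains, convenient because it passes to subwords and along renamings of letters. -/
def AvoidsABA {α : Type*} (v : List α) : Prop := ∀ ⦃a b : α⦄, a ≠ b → ¬ [a, b, a].Sublist v

/-- The window of length `L` starting at position `c` in the infinite periodic word
`0^r 1^r ⋯ (n-1)^r 0^r 1^r ⋯`, whose letter at position `i` is `i / r % n`. -/
def cyclicBlockWord (r n c L : ℕ) : List ℕ := (List.range' c L).map fun i => i / r % n

section AvoidsABA

variable {α β : Type*} {u v : List α} {a b : α}

theorem pair_sublist_or_of_mem (ha : a ∈ v) (hb : b ∈ v) (hab : a ≠ b) :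
    [a, b].Sublist v ∨ [b, a].Sublist v := by
  let R (x y : α) : Prop := [x, y].Sublist v ∨ [y, x].Sublist v
  have : Std.Symm R := ⟨fun _ _ => Or.symm⟩
  have hR : v.Pairwise R := List.pairwise_iff_forall_sublist.2 Or.inl
  exact hR.forall ha hb hab

theorem dropLast_sublist_dropLast (huv : u.Sublist v) : u.dropLast.Sublist v.dropLast := by
  rw [← List.reverse_sublist, ← List.tail_reverse, ← List.tail_reverse]
  exact huv.reverse.tail

theorem AvoidsABA.sublist (hv : AvoidsABA v) (huv : u.Sublist v) : AvoidsABA u :=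
  fun _ _ hab h => hv hab (h.trans huv)

theorem AvoidsABA.map_of_injOn {f : α → β} (hv : AvoidsABA v) (hf : Set.InjOn f {x | x ∈ v}) :
    AvoidsABA (v.map f) := by
  intro a b hab h
  obtain ⟨l, hl, hmap⟩ := List.sublist_map_iff.1 h
  obtain ⟨x, y, z, rfl⟩ := List.length_eq_three.1 (by simpa using congrArg List.length hmap.symm)
  obtain ⟨rfl, rfl, hxz⟩ : a = f x ∧ b = f y ∧ a = f z := by simpa using hmap
  obtain rfl : x = z := hf (hl.subset (by simp)) (hl.subset (by simp)) hxz
  exact hv (fun hxy => hab (congrArg f hxy)) hl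

theorem avoidsABA_of_pairwise_le [PartialOrder α] (hv : v.Pairwise (· ≤ ·)) : AvoidsABA v := by
  intro a b hab h
  have haba : a ≤ b ∧ b ≤ a := by simpa using hv.sublist h
  exact hab (haba.1.antisymm haba.2)

theorem AvoidsABA.exists_cons_eq_replicate_append (hv : AvoidsABA (a :: v)) :
    ∃ m t, a :: v = List.replicate (m + 1) a ++ t ∧ a ∉ t := by
  induction v with
  | nil => exact ⟨0, [], rfl, List.not_mem_nil⟩
  | cons b v ih =>
    by_cases hab : a = b
    · subst hab
      obtain ⟨m, t, hmt, ht⟩ := ih (hv.sublist (List.sublist_cons_self _ _))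
      exact ⟨m + 1, t, by rw [hmt, List.replicate_succ (n := m + 1), List.cons_append], ht⟩
    · refine ⟨0, b :: v, rfl, fun ha => hv hab ?_⟩
      have hav : a ∈ v := (List.mem_cons.1 ha).resolve_left hab
      exact ((List.singleton_sublist.2 hav).cons_cons b).cons_cons a

theorem exists_eq_of_avoidsABA_dropLast_of_avoidsABA_tail (hv : ¬ AvoidsABA v)
    (hdropLast : AvoidsABA v.dropLast) (htail : AvoidsABA v.tail) :
    ∃ a w, AvoidsABA w ∧ a ∉ w ∧ v = [a] ++ w ++ [a] := by
  obtain ⟨a, b, hab, haba⟩ : ∃ a b, a ≠ b ∧ [a, b, a].Sublist v := by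
    simpa only [AvoidsABA, not_forall, not_not, exists_prop] using hv
  obtain ⟨t, rfl, hba⟩ : ∃ t, v = a :: t ∧ [b, a].Sublist t := by
    cases haba with
    | cons _ h => exact absurd h (htail hab)
    | cons_cons _ h => exact ⟨_, rfl, h⟩
  obtain ⟨w, c, rfl⟩ : ∃ w c, t = w ++ [c] :=
    ⟨_, _, (List.dropLast_append_getLast (List.ne_nil_of_mem (a := a) (hba.subset (by simp)))).symm⟩
  rw [List.tail_cons] at htail
  rw [← List.cons_append, List.dropLast_concat] at hdropLast
  obtain ⟨rfl, hb⟩ : c = a ∧ b ∈ w := by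
    obtain ⟨l₁, l₂, hl, hl₁, hl₂⟩ := List.sublist_append_iff.1 hba
    rcases List.sublist_singleton.1 hl₂ with rfl | rfl
    · rw [List.append_nil] at hl
      exact absurd ((hl ▸ hl₁).cons_cons a) (hdropLast hab)
    · obtain ⟨rfl, hac⟩ := List.append_inj' (s₁ := [b]) (t₁ := [a]) hl rfl
      exact ⟨(List.singleton_inj.1 hac).symm, hl₁.subset (by simp)⟩
  refine ⟨c, w, htail.sublist (List.sublist_append_left _ _), fun hc => ?_, rfl⟩
  rcases pair_sublist_or_of_mem hc hb hab with hcb | hbc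
  · exact htail hab (hcb.append (List.Sublist.refl [c]))
  · exact hdropLast hab (hbc.cons_cons c)

end AvoidsABA

section IsBlowupOfChain

theorem isBlowupOfChain_nil : IsBlowupOfChain [] :=
  ⟨[], [], List.nodup_nil, by simp, rfl, rfl⟩

theorem subset_flatten_zipWith_replicate {α : Type*} {a : List α} {s : List ℕ} (hs : ∀ m ∈ s, 1 ≤ m)
    (hlen : a.length = s.length) :
    a ⊆ (List.zipWith (fun x m => List.replicate m x) a s).flatten := by
  intro x hx
  obtain ⟨i, hi, rfl⟩ := List.getElem_of_mem hx
  have hi' : i < s.length := hlen ▸ hi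
  refine List.mem_flatten.2 ⟨List.replicate s[i] a[i], ?_, ?_⟩
  · exact List.mem_iff_getElem.2 ⟨i, by simp [hi, hi'], by simp⟩
  · exact List.mem_replicate.2 ⟨Nat.one_le_iff_ne_zero.1 (hs _ (List.getElem_mem hi')), rfl⟩

theorem IsBlowupOfChain.replicate_append {v : List ℕ} {x m : ℕ} (hv : IsBlowupOfChain v)
    (hx : x ∉ v) (hm : 1 ≤ m) : IsBlowupOfChain (List.replicate m x ++ v) := by
  obtain ⟨a, s, ha, hs, hlen, rfl⟩ := hv
  have hxa : x ∉ a := fun h => hx (subset_flatten_zipWith_replicate hs hlen h)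
  exact ⟨x :: a, m :: s, List.nodup_cons.2 ⟨hxa, ha⟩, List.forall_mem_cons.2 ⟨hm, hs⟩,
    congrArg Nat.succ hlen, rfl⟩

theorem AvoidsABA.isBlowupOfChain {v : List ℕ} (hv : AvoidsABA v) : IsBlowupOfChain v := by
  match v with
  | [] => exact isBlowupOfChain_nil
  | a :: v =>
    obtain ⟨m, t, hmt, ha⟩ := hv.exists_cons_eq_replicate_append
    have ht : IsBlowupOfChain t :=
      (hv.sublist (hmt ▸ List.sublist_append_right _ _)).isBlowupOfChain
    exact hmt ▸ ht.replicate_append ha m.succ_pos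
termination_by v.length
decreasing_by
  have hlength := congrArg List.length hmt
  simp only [List.length_cons, List.length_append, List.length_replicate] at hlength ⊢
  omega

end IsBlowupOfChain

section Contains

variable {u v : List ℕ}

theorem Contains.avoidsABA_dropLast (huv : Contains u v) (hu : AvoidsABA u.dropLast) :
    AvoidsABA v.dropLast := by
  obtain ⟨w, hwu, β, rfl⟩ := huv
  rw [← List.map_dropLast]
  exact (hu.sublist (dropLast_sublist_dropLast hwu)).map_of_injOn β.injective.injOn

theorem Contains.avoidsABA_tail (huv : Contains u v) (hu : AvoidsABA u.tail) :
    AvoidsABA v.tail := by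
  obtain ⟨w, hwu, β, rfl⟩ := huv
  rw [← List.map_tail]
  exact (hu.sublist hwu.tail).map_of_injOn β.injective.injOn

/-- Positivity of `Ex v k r n` excludes the case where the lengths are unbounded, in which `sSup`
takes the junk value `0`. -/
theorem contains_of_Ex_lt_length {k r n : ℕ} (hpos : 0 < Ex v k r n) (hu : ArithSparse k r u)
    (hcard : u.toFinset.card ≤ n) (hlt : Ex v k r n < u.length) : Contains u v := by
  by_contra hfree
  have hbdd : BddAbove {l : ℕ | ∃ u : List ℕ,
      u.length = l ∧ ¬ Contains u v ∧ ArithSparse k r u ∧ u.toFinset.card ≤ n} := by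
    by_contra hunbdd
    exact hpos.ne' (Nat.sSup_of_not_bddAbove hunbdd)
  exact hlt.not_ge (le_csSup hbdd ⟨u, rfl, hfree, hu, hcard⟩)

end Contains

section CyclicBlockWord

variable {k r n : ℕ} (c L : ℕ)

theorem length_cyclicBlockWord : (cyclicBlockWord r n c L).length = L := by
  simp [cyclicBlockWord]

theorem tail_cyclicBlockWord_succ :
    (cyclicBlockWord r n c (L + 1)).tail = cyclicBlockWord r n (c + 1) L := rfl

theorem dropLast_cyclicBlockWord_succ :
    (cyclicBlockWord r n c (L + 1)).dropLast = cyclicBlockWord r n c L := by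
  rw [cyclicBlockWord, List.range'_1_concat, List.map_append, List.map_singleton,
    List.dropLast_concat, cyclicBlockWord]

theorem card_toFinset_cyclicBlockWord_le (hn : 0 < n) :
    (cyclicBlockWord r n c L).toFinset.card ≤ n := by
  have hsub : (cyclicBlockWord r n c L).toFinset ⊆ Finset.range n := by
    intro x hx
    obtain ⟨i, -, rfl⟩ := List.mem_map.1 (List.mem_toFinset.1 hx)
    exact Finset.mem_range.2 (Nat.mod_lt _ hn)
  simpa using Finset.card_le_card hsub

theorem arithSparse_cyclicBlockWord (hr : 0 < r) (hk : k ≤ n) :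
    ArithSparse k r (cyclicBlockWord r n c L) := by
  intro j a b hab hbk hj heq
  rw [length_cyclicBlockWord] at hj
  have letter_eq (m : ℕ) (hm : m ≤ b) :
      (cyclicBlockWord r n c L).getD (j + m * r) 0 = ((c + j) / r + m) % n := by
    have hmL : j + m * r < L := (Nat.add_le_add_left (Nat.mul_le_mul_right r hm) j).trans_lt hj
    rw [List.getD_eq_getElem _ _ (by rwa [length_cyclicBlockWord])]
    simp only [cyclicBlockWord, List.getElem_map, List.getElem_range', one_mul]
    rw [← Nat.add_assoc, Nat.add_mul_div_right _ _ hr]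
  rw [letter_eq a hab.le, letter_eq b le_rfl] at heq
  have hmod : a ≡ b [MOD n] := Nat.ModEq.add_left_cancel' _ heq
  exact hab.ne (hmod.eq_of_lt_of_lt (by omega) (by omega))

theorem avoidsABA_cyclicBlockWord_mul (hr : 0 < r) (q : ℕ) :
    AvoidsABA (cyclicBlockWord r n (r * q) (r * n)) := by
  have hblocks : AvoidsABA ((List.range' (r * q) (r * n)).map (· / r)) :=
    avoidsABA_of_pairwise_le <| List.pairwise_map.2 <|
      (List.pairwise_le_range' 1).imp fun hij => Nat.div_le_div_right hij
  have hinj : Set.InjOn (· % n) {x | x ∈ (List.range' (r * q) (r * n)).map (· / r)} := by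
    refine (Nat.mod_injOn_Ico q n).mono fun x hx => ?_
    obtain ⟨i, hi, rfl⟩ := List.mem_map.1 hx
    rw [List.mem_range'_1, ← Nat.mul_add] at hi
    have hqi : q ≤ i / r := (Nat.le_div_iff_mul_le hr).2 (Nat.mul_comm r q ▸ hi.1)
    exact Finset.mem_coe.2 (Finset.mem_Ico.2 ⟨hqi, Nat.div_lt_of_lt_mul hi.2⟩)
  simpa [cyclicBlockWord, Function.comp_def] using hblocks.map_of_injOn hinj

end CyclicBlockWord

theorem stmt_12 (v : List ℕ) (hv : ¬ IsBlowupOfChain v) (k r n : ℕ)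
    (hk : v.toFinset.card ≤ k) (hr : 1 ≤ r) (hn : k ≤ n)
    (h : Ex v k r n = r * n) :
    ∃ (a : ℕ) (w : List ℕ), IsBlowupOfChain w ∧ a ∉ w ∧ Isomorphic v ([a] ++ w ++ [a]) := by
  have hABA : ¬ AvoidsABA v := fun hv' => hv hv'.isBlowupOfChain
  have hv0 : v ≠ [] := fun hv' => hv (hv' ▸ isBlowupOfChain_nil)
  have hn0 : 0 < n :=
    (Finset.card_pos.2 ((List.toFinset_nonempty_iff v).2 hv0)).trans_le (hk.trans hn)
  have hcontains (c : ℕ) : Contains (cyclicBlockWord r n c (r * n + 1)) v := by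
    refine contains_of_Ex_lt_length (h ▸ Nat.mul_pos hr hn0) (arithSparse_cyclicBlockWord c _ hr hn)
      (card_toFinset_cyclicBlockWord_le c _ hn0) ?_
    rw [h, length_cyclicBlockWord]
    exact Nat.lt_succ_self _
  have hdropLast : AvoidsABA v.dropLast := by
    refine (hcontains (r * 0)).avoidsABA_dropLast ?_
    rw [dropLast_cyclicBlockWord_succ]
    exact avoidsABA_cyclicBlockWord_mul hr 0
  have htail : AvoidsABA v.tail := by
    refine (hcontains (r * 1 - 1)).avoidsABA_tail ?_
    rw [tail_cyclicBlockWord_succ, Nat.sub_add_cancel (by omega)]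
    exact avoidsABA_cyclicBlockWord_mul hr 1
  obtain ⟨a, w, hw, haw, rfl⟩ :=
    exists_eq_of_avoidsABA_dropLast_of_avoidsABA_tail hABA hdropLast htail
  exact ⟨a, w, hw.isBlowupOfChain, haw, Equiv.refl ℕ, (List.map_id _).symm⟩
end

section
/- Let a ≠ b be two letters, k ≥ 2 and n ≥ 2k. Then Ex_2(abba,k,n) ≥ 2n+1 > 2n; indeed the sequence 1 2 ... (n-1) n 1 2 ... (n-1) n n of length 2n+1 is abba-free and (k,2)-sparse. -/
/-!
Whether `u` contains `v` depends only on which letters of `v` coincide. Hence, when `v` has at most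
`k` distinct letters, a `v`-free `(k,r)`-sparse `u` over a bounded alphabet is short: cut it into
blocks of length `k * r + 1` and read off `k` letters at distance `r` in each. If `u` is long, many
blocks show the same `k` distinct letters, and one letter of `v` can be picked from each of them. So
the supremum `Ex v k r n` is a maximum rather than a junk value, and it is at least the length of
any particular admissible sequence.

In `1 2 ⋯ n 1 2 ⋯ n n` equal letters are at distance `n`, or one of them is the last letter and the
distance is `1` or `n + 1`. A multiple `d * r` with `1 ≤ d < k` lies in `[2, n - 1]` when `2 ≤ r`
and `(k - 1) * r < n`. In a nested pair `a ⋯ b ⋯ b ⋯ a` the inner repetition avoids the last letter,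
so it has distance `n`, and the outer one would have distance at least `n + 2`.
-/

theorem exists_perm_apply_eq {ι α : Type*} [Finite ι] [Infinite α] {f g : ι → α}
    (h : ∀ i j, f i = f j ↔ g i = g j) : ∃ β : Equiv.Perm α, ∀ i, β (f i) = g i := by
  choose s hs using fun x : Set.range f ↦ x.2
  have inj : Function.Injective (g ∘ s) := fun x y hxy ↦ by
    rw [Subtype.ext_iff, ← hs x, ← hs y]
    exact (h _ _).2 hxy
  have small : Cardinal.mk (Set.range f) < Cardinal.mk α :=
    (Set.finite_range f).lt_aleph0.trans_le (Cardinal.aleph0_le_mk α)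
  obtain ⟨β, hβ⟩ := Cardinal.extend_function_of_lt ⟨g ∘ s, inj⟩ small ⟨Equiv.refl α⟩
  exact ⟨β, fun i ↦ (hβ ⟨f i, i, rfl⟩).trans ((h _ _).1 (hs ⟨f i, i, rfl⟩))⟩

theorem exists_orderEmbedding_forall_apply_eq {α β : Type*} [LinearOrder α] [Fintype α] [Fintype β]
    (f : α → β) {m : ℕ} (hm : Fintype.card β * m < Fintype.card α) :
    ∃ (x : α) (g : Fin m ↪o α), ∀ i, f (g i) = f x := by
  classical
  obtain ⟨c, hc⟩ := Fintype.exists_lt_card_fiber_of_mul_lt_card f hm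
  obtain ⟨x, hx⟩ := Finset.card_pos.1 (Nat.zero_lt_of_lt hc)
  refine ⟨x, Finset.orderEmbOfCardLe _ hc.le, fun i ↦ ?_⟩
  rw [(Finset.mem_filter.1 hx).2]
  exact (Finset.mem_filter.1 (Finset.orderEmbOfCardLe_mem _ hc.le i)).2

theorem ofFn_getElem_sublist {α : Type*} {l : List α} {m : ℕ} (f : Fin m ↪o Fin l.length) :
    (List.ofFn fun i ↦ l[f i]).Sublist l :=
  List.sublist_iff_exists_fin_orderEmbedding_get_eq.2
    ⟨(Fin.castOrderIso List.length_ofFn).toOrderEmbedding.trans f, fun i ↦ by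
      rw [List.get_ofFn]
      rfl⟩

section Containment

variable {u v : List ℕ}

theorem contains_iff_exists_orderEmbedding :
    Contains u v ↔ ∃ f : Fin v.length ↪o Fin u.length, ∀ i j, u[f i] = u[f j] ↔ v[i] = v[j] := by
  constructor
  · rintro ⟨w, hw, β, rfl⟩
    obtain ⟨f, hf⟩ := List.sublist_iff_exists_fin_orderEmbedding_get_eq.1 hw
    refine ⟨(Fin.castOrderIso (List.length_map β)).toOrderEmbedding.trans f, fun i j ↦ ?_⟩
    have hval (i : Fin w.length) : u[f i] = w[i] := (hf i).symm
    simp [hval]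
  · rintro ⟨f, hf⟩
    obtain ⟨β, hβ⟩ := exists_perm_apply_eq hf
    refine ⟨_, ofFn_getElem_sublist f, β, ?_⟩
    calc v = List.ofFn fun i : Fin v.length ↦ v[i] := List.ofFn_getElem.symm
      _ = List.ofFn (β ∘ fun i ↦ u[f i]) := congrArg List.ofFn (funext fun i ↦ (hβ i).symm)
      _ = (List.ofFn fun i ↦ u[f i]).map β := List.map_ofFn.symm

theorem contains_of_repeated_blocks {k : ℕ} (hv : v.toFinset.card ≤ k) {c : Fin k → ℕ}
    (hc : Function.Injective c) (pos : Fin v.length → Fin k → Fin u.length)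
    (hpos : ∀ i j s t, i < j → pos i s < pos j t) (hval : ∀ i s, u[pos i s] = c s) :
    Contains u v := by
  obtain ⟨e⟩ : Nonempty (v.toFinset ↪ Fin k) :=
    Function.Embedding.nonempty_of_card_le (by
      simpa only [Fintype.card_coe, Fintype.card_fin] using hv)
  let f (i : Fin v.length) := pos i (e ⟨v[i], by simp⟩)
  have hf : StrictMono f := fun i j hij ↦ hpos i j _ _ hij
  refine contains_iff_exists_orderEmbedding.2 ⟨OrderEmbedding.ofStrictMono f hf, fun i j ↦ ?_⟩
  simp only [OrderEmbedding.coe_ofStrictMono, f, hval, hc.eq_iff, e.injective.eq_iff,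
    Subtype.mk.injEq]

end Containment

section Extremal

variable {u v : List ℕ} {k r n : ℕ}

theorem ArithSparse.injective_getElem (hu : ArithSparse k r u) {p : Fin k → Fin u.length} {j : ℕ}
    (hp : ∀ t, (p t : ℕ) = j + t * r) : Function.Injective fun t ↦ u[p t] := by
  refine .of_lt_imp_ne fun s t hst ↦ ?_
  have hs := (p s).isLt
  have ht := (p t).isLt
  have hne := hu j s t hst t.isLt (hp t ▸ ht)
  rw [← hp, ← hp, List.getD_eq_getElem _ _ hs, List.getD_eq_getElem _ _ ht] at hne
  exact hne

theorem ArithSparse.length_lt_of_not_contains (hu : ArithSparse k r u)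
    (hv : v.toFinset.card ≤ k) (huv : ¬ Contains u v) :
    u.length < (u.toFinset.card ^ k * v.length + 1) * (k * r + 1) := by
  by_contra! hlen
  set N := u.toFinset.card ^ k * v.length + 1
  have offset_lt (t : Fin k) : t * r < k * r + 1 :=
    Nat.lt_succ_of_le (Nat.mul_le_mul_right r t.isLt.le)
  have pos_lt {i j : ℕ} (hij : i < j) (t : Fin k) : i * (k * r + 1) + t * r < j * (k * r + 1) :=
    calc i * (k * r + 1) + t * r < (i + 1) * (k * r + 1) := by linarith [offset_lt t]
      _ ≤ j * (k * r + 1) := Nat.mul_le_mul_right _ hij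
  let pos (i : Fin N) (t : Fin k) : Fin u.length :=
    ⟨i * (k * r + 1) + t * r, (pos_lt i.isLt t).trans_le hlen⟩
  let block (i : Fin N) (t : Fin k) : u.toFinset := ⟨u[pos i t], by simp⟩
  obtain ⟨i₀, g, hg⟩ := exists_orderEmbedding_forall_apply_eq block (m := v.length) (by
    simp only [Fintype.card_fun, Fintype.card_coe, Fintype.card_fin, N, Nat.lt_succ_self])
  have letters_injective : Function.Injective fun t ↦ u[pos i₀ t] :=
    hu.injective_getElem fun _ ↦ rfl
  exact huv (contains_of_repeated_blocks hv letters_injective (fun i ↦ pos (g i))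
    (fun i j s t hij ↦ (pos_lt (g.strictMono hij) s).trans_le (Nat.le_add_right _ _))
    fun i t ↦ congrArg Subtype.val (congrFun (hg i) t))

theorem ArithSparse.length_le_Ex (hu : ArithSparse k r u) (hv : v.toFinset.card ≤ k)
    (huv : ¬ Contains u v) (hn : u.toFinset.card ≤ n) : u.length ≤ Ex v k r n := by
  refine le_csSup ⟨(n ^ k * v.length + 1) * (k * r + 1), ?_⟩ ⟨u, rfl, huv, hu, hn⟩
  rintro _ ⟨w, rfl, hwv, hw, hwn⟩
  calc w.length ≤ (w.toFinset.card ^ k * v.length + 1) * (k * r + 1) :=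
        (hw.length_lt_of_not_contains hv hwv).le
    _ ≤ (n ^ k * v.length + 1) * (k * r + 1) := by gcongr

end Extremal

/-- The sequence `1 2 ⋯ n 1 2 ⋯ n n`, witnessing the lower bound `2 * n + 1` for `abba`. -/
def doubledRun (n : ℕ) : List ℕ :=
  (List.range n).map (· + 1) ++ (List.range n).map (· + 1) ++ [n]

section DoubledRun

theorem length_doubledRun (n : ℕ) : (doubledRun n).length = 2 * n + 1 := by
  simp only [doubledRun, List.length_append, List.length_map, List.length_range,
    List.length_singleton]
  omega

variable {n : ℕ}

theorem getElem_doubledRun {i : ℕ} (hi : i < (doubledRun n).length) :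
    (doubledRun n)[i] = if i < n then i + 1 else if i < 2 * n then i - n + 1 else n := by
  have := length_doubledRun n
  simp only [doubledRun, List.getElem_append, List.length_append, List.length_map,
    List.length_range, List.getElem_map, List.getElem_range, List.getElem_singleton]
  split_ifs <;> omega

theorem eq_add_or_of_getElem_doubledRun_eq {i j : ℕ} (hij : i < j) (hj : j < (doubledRun n).length)
    (h : (doubledRun n)[i] = (doubledRun n)[j]) :
    j = i + n ∨ j = 2 * n ∧ (j = i + 1 ∨ j = i + n + 1) := by
  rw [getElem_doubledRun, getElem_doubledRun] at h
  rw [length_doubledRun] at hj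
  split_ifs at h <;> omega

theorem not_contains_doubledRun_abba (a b : ℕ) : ¬ Contains (doubledRun n) [a, b, b, a] := by
  rw [contains_iff_exists_orderEmbedding]
  rintro ⟨f, hf⟩
  have h₀₁ : f 0 < f 1 := f.strictMono (Nat.lt_succ_self 0)
  have h₁₂ : f 1 < f 2 := f.strictMono (Nat.lt_succ_self 1)
  have h₂₃ : f 2 < f 3 := f.strictMono (Nat.lt_succ_self 2)
  have last : (f 3 : ℕ) < 2 * n + 1 := (f 3).isLt.trans_eq (length_doubledRun n)
  have outer := eq_add_or_of_getElem_doubledRun_eq (h₀₁.trans (h₁₂.trans h₂₃)) (f 3).isLt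
    ((hf 0 3).2 rfl)
  have inner := eq_add_or_of_getElem_doubledRun_eq h₁₂ (f 2).isLt ((hf 1 2).2 rfl)
  rw [Fin.lt_def] at h₀₁ h₁₂ h₂₃
  have inner_gap : (f 2 : ℕ) = f 1 + n := by omega
  omega

theorem arithSparse_doubledRun {k r : ℕ} (hr : 2 ≤ r) (hkn : k * r < n + r) :
    ArithSparse k r (doubledRun n) := by
  intro j a b hab hbk hlen heq
  obtain ⟨d, rfl⟩ := Nat.exists_eq_add_of_le hab.le
  have hd_lower : r ≤ d * r := Nat.le_mul_of_pos_left r (by omega)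
  have hd_upper : (d + 1) * r ≤ k * r := Nat.mul_le_mul_right r (by omega)
  rw [add_mul] at hlen heq
  rw [add_one_mul] at hd_upper
  rw [List.getD_eq_getElem _ _ (by omega), List.getD_eq_getElem _ _ hlen] at heq
  have := eq_add_or_of_getElem_doubledRun_eq (by omega) hlen heq
  omega

theorem card_toFinset_doubledRun_le (hn : 0 < n) : (doubledRun n).toFinset.card ≤ n := by
  have hsub : (doubledRun n).toFinset ⊆ Finset.Icc 1 n := fun x hx ↦ by
    simp only [doubledRun, List.mem_toFinset, List.mem_append, List.mem_map, List.mem_range,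
      List.mem_singleton] at hx
    rw [Finset.mem_Icc]
    rcases hx with (⟨i, hi, rfl⟩ | ⟨i, hi, rfl⟩) | rfl <;> omega
  simpa using Finset.card_le_card hsub

end DoubledRun

theorem stmt_13_general (a b : ℕ) {k r n : ℕ} (hk : 2 ≤ k) (hr : 2 ≤ r) (hkn : k * r < n + r) :
    2 * n + 1 ≤ Ex [a, b, b, a] k r n ∧
      (doubledRun n).length = 2 * n + 1 ∧ ¬ Contains (doubledRun n) [a, b, b, a] ∧
      ArithSparse k r (doubledRun n) ∧ (doubledRun n).toFinset.card ≤ n := by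
  have hn : 0 < n := by
    have := Nat.mul_le_mul_right r hk
    omega
  have hsparse := arithSparse_doubledRun hr hkn
  have hfree := not_contains_doubledRun_abba (n := n) a b
  have hletters := card_toFinset_doubledRun_le hn
  have hpair : [a, b, b, a].toFinset ⊆ {a, b} := by simp [Finset.subset_iff]
  have habba : [a, b, b, a].toFinset.card ≤ k :=
    (Finset.card_le_card hpair).trans (Finset.card_le_two.trans hk)
  have hEx := hsparse.length_le_Ex habba hfree hletters
  rw [length_doubledRun] at hEx
  exact ⟨hEx, length_doubledRun n, hfree, hsparse, hletters⟩

theorem stmt_13 (a b : ℕ) (hab : a ≠ b) (k n : ℕ) (hk : 2 ≤ k) (hn : 2 * k ≤ n) :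
    2 * n + 1 ≤ Ex [a, b, b, a] k 2 n ∧ 2 * n < Ex [a, b, b, a] k 2 n ∧
    (let w : List ℕ := (List.range n).map (· + 1) ++ (List.range n).map (· + 1) ++ [n];
      w.length = 2 * n + 1 ∧ ¬ Contains w [a, b, b, a] ∧ ArithSparse k 2 w ∧
      w.toFinset.card ≤ n) := by
  obtain ⟨hEx, hrun⟩ := stmt_13_general a b (r := 2) (n := n) hk le_rfl (by omega)
  exact ⟨hEx, hEx, hrun⟩
end
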